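/- arXiv:1309.7842 — 6 statements merged into one kernel-verified Lean document; each statement's English description precedes it below -/
import Mathlib

section
/- (Gong–Song conjecture for q prime.) Let p be an odd prime and n ≥ 1. Let L be a finite field with |L| = p^n and K = 𝔽_p. Suppose f : L∖{0} → K is difference balanced and balanced (the latter normalization is no loss of generality, since every difference balanced function is an affine shift of a balanced one). Then f is d-homogeneous: there exists an integer d with gcd(d, p−1) = 1 such that f(a·x) = a^d f(x) for every a ∈ K∖{0} and every x ∈ L∖{0}. -/
/-- A function `f : L∖{0} → K` is balanced. -/
def IsBalanced {K L : Type*} [Field K] [Field L] (q n : ℕ) (f : L → K) : Prop :=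
  Nat.card {x : L | x ≠ 0 ∧ f x = 0} = q ^ (n - 1) - 1 ∧
    ∀ b : K, b ≠ 0 → Nat.card {x : L | x ≠ 0 ∧ f x = b} = q ^ (n - 1)

/-- A function `f : L∖{0} → K` is difference balanced. -/
def IsDiffBalanced {K L : Type*} [Field K] [Field L] (q n : ℕ) (f : L → K) : Prop :=
  ∀ a : L, a ≠ 0 → a ≠ 1 → IsBalanced q n (fun x => f (a * x) - f x)

/-- `f` is `d`-homogeneous: `gcd(d, q−1) = 1` and `f(cx) = c^d f(x)` for all
`c ∈ K∖{0}` and `x ∈ L∖{0}`. -/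
def IsDHomogeneous {K L : Type*} [Field K] [Field L] [Algebra K L] (q d : ℕ)
    (f : L → K) : Prop :=
  Nat.Coprime d (q - 1) ∧
    ∀ c : K, c ≠ 0 → ∀ x : L, x ≠ 0 → f (algebraMap K L c * x) = c ^ d * f x

/-- `N_{b₁,b₂}(a) = |{x ∈ L∖{0} : f(x) = b₁ and f(ax) = b₂}|`. -/
noncomputable def Ntt {K L : Type*} [Field K] [Field L] (f : L → K) (a : L) (b₁ b₂ : K) : ℕ :=
  Nat.card {x : L | x ≠ 0 ∧ f x = b₁ ∧ f (a * x) = b₂}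

/-- `f` is two-tuple balanced. -/
def IsTwoTupleBalanced {K L : Type*} [Field K] [Field L] [Algebra K L] (q n : ℕ)
    (f : L → K) : Prop :=
  (∀ a : L, a ≠ 0 → (∀ c : K, algebraMap K L c ≠ a) →
      (Ntt f a 0 0 = q ^ (n - 2) - 1 ∧
        ∀ b₁ b₂ : K, ¬(b₁ = 0 ∧ b₂ = 0) → Ntt f a b₁ b₂ = q ^ (n - 2))) ∧
  (∀ c : K, c ≠ 0 → ∃ μ : K,
      (∀ x : L, x ≠ 0 → f (algebraMap K L c * x) = μ * f x) ∧
      Ntt f (algebraMap K L c) 0 0 = q ^ (n - 1) - 1 ∧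
      (∀ b₁ : K, b₁ ≠ 0 → Ntt f (algebraMap K L c) b₁ (μ * b₁) = q ^ (n - 1)) ∧
      (∀ b₁ b₂ : K, b₂ ≠ μ * b₁ → Ntt f (algebraMap K L c) b₁ b₂ = 0))

/-!
For a nontrivial additive character `φ` of `𝔽_p` and a nontrivial character `χ` of `Lˣ`, difference
balance says that the Gauss sum `G(χ, φ ∘ f)` times `G(χ⁻¹, φ⁻¹ ∘ f)` is `p ^ n`. An automorphism
`σ` of the `p(p ^ n - 1)`-th cyclotomic field that fixes the `(p ^ n - 1)`-th roots of unity lies in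
the inertia group of every prime above `p`, hence sends each Gauss sum to an associate. By Fourier
inversion, all correlations of `σ ∘ φ ∘ f = φ ∘ (b • f)` with `φ ∘ f` are therefore congruent to
`-1` modulo `p ^ n`. Some correlation is not equal to `-1`; adding `1` to it gives a nonzero
multiple of `p ^ n` that is a sum of `p ^ n` roots of unity, so that by Kronecker's theorem all of
these are equal, and `b • f` is a shift of `f`.

Difference balance makes the shift unique, so its order divides `p - 1` and it is a scalar. The
resulting dependence of `b` on the scalar is an automorphism of the cyclic group `𝔽_pˣ`, that is, a
power map with exponent prime to `p - 1`.
-/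

open NumberField
open scoped Pointwise

section CharacterSums

theorem sum_dual_eq_zero {G S : Type*} [CommGroup G] [Finite G] [CommRing S] [IsDomain S]
    [HasEnoughRootsOfUnity S (Monoid.exponent G)] [Fintype (G →* Sˣ)] {a : G} (ha : a ≠ 1) :
    ∑ χ : G →* Sˣ, (χ a : S) = 0 := by
  refine sum_hom_units_eq_zero ((Units.coeHom S).comp (MonoidHom.eval a)) fun h => ?_
  obtain ⟨χ, hχ⟩ := CommGroup.exists_apply_ne_one_of_hasEnoughRootsOfUnity G S ha
  exact hχ <| Units.ext <| DFunLike.congr_fun h χ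

variable {G S : Type*} [CommGroup G] [Fintype G] [CommRing S]

/-- The Fourier coefficient of `u : G → S` at the character `χ`: for `G = Lˣ` and `u = φ ∘ f`
with `φ` an additive character, this is the Gauss sum of `f` attached to `χ` and `φ`. -/
def charSum (u : G → S) (χ : G →* Sˣ) : S := ∑ x, χ x * u x

/-- The correlation of `u` and `w` at the shift `a`. The group is written multiplicatively, so that
shifting is `x ↦ a * x`, and `w` is not conjugated: for sequences of roots of unity, conjugation is
replaced by taking `w` to be the inverse of a sequence. -/
def crossCorrelation (u w : G → S) (a : G) : S := ∑ x, u (a * x) * w x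

theorem charSum_one (u : G → S) : charSum u 1 = ∑ x, u x := by
  simp [charSum]

theorem charSum_crossCorrelation (u w : G → S) (χ : G →* Sˣ) :
    charSum (crossCorrelation u w) χ = charSum u χ * charSum w χ⁻¹ := by
  simp only [charSum, crossCorrelation, Finset.mul_sum, Finset.sum_mul]
  rw [Finset.sum_comm]
  refine Finset.sum_congr rfl fun x _ => ?_
  rw [← Equiv.sum_comp (Equiv.mulRight x) fun y => χ y * u y * (χ⁻¹ x * w x)]
  refine Finset.sum_congr rfl fun a _ => ?_
  have hχ : (χ a : S) = χ (a * x) * χ⁻¹ x := by simp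
  rw [hχ, Equiv.coe_mulRight]
  ring

theorem sum_crossCorrelation (u w : G → S) :
    ∑ a, crossCorrelation u w a = (∑ x, u x) * ∑ x, w x := by
  simpa [charSum] using charSum_crossCorrelation u w 1

theorem charSum_smul {Γ : Type*} [Group Γ] [MulSemiringAction Γ S] {σ : Γ} {χ : G →* Sˣ}
    (hχ : ∀ x, σ • (χ x : S) = χ x) (u : G → S) :
    charSum (fun x => σ • u x) χ = σ • charSum u χ := by
  simp only [charSum, Finset.smul_sum, smul_mul', hχ]

variable [IsDomain S]

theorem sum_char_eq_zero {χ : G →* Sˣ} (hχ : χ ≠ 1) : ∑ x, (χ x : S) = 0 :=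
  sum_hom_units_eq_zero ((Units.coeHom S).comp χ) fun h =>
    hχ <| MonoidHom.ext fun x => Units.ext <| DFunLike.congr_fun h x

theorem charSum_eq_apply_one_add_one {c : G → S} (hc : ∀ a ≠ 1, c a = -1) {χ : G →* Sˣ}
    (hχ : χ ≠ 1) : charSum c χ = c 1 + 1 := by
  classical
  have hsplit : ∀ a, (χ a : S) * c a = (if a = 1 then c 1 + 1 else 0) - χ a := by
    intro a
    split_ifs with ha
    · simp [ha]
    · rw [hc a ha]
      ring
  simp only [charSum, hsplit, Finset.sum_sub_distrib, sum_char_eq_zero hχ]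
  simp

variable [HasEnoughRootsOfUnity S (Monoid.exponent G)]

theorem sum_charSum_mul_inv [Fintype (G →* Sˣ)] (u : G → S) (a : G) :
    ∑ χ, charSum u χ * χ a⁻¹ = Fintype.card G * u a := by
  classical
  have hdual : ∀ x, ∑ χ : G →* Sˣ, (χ x * u x * χ a⁻¹ : S) =
      if x = a then Fintype.card G * u a else 0 := by
    intro x
    have hχ : ∀ χ : G →* Sˣ, (χ x * u x * χ a⁻¹ : S) = χ (x * a⁻¹) * u x := by
      intro χ
      rw [map_mul, Units.val_mul]
      ring
    simp only [hχ, ← Finset.sum_mul]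
    split_ifs with hx
    · subst hx
      simp [← Nat.card_eq_fintype_card, CommGroup.card_monoidHom_of_hasEnoughRootsOfUnity]
    · rw [sum_dual_eq_zero (by rwa [ne_eq, mul_inv_eq_one]), zero_mul]
  simp only [charSum, Finset.sum_mul]
  rw [Finset.sum_comm]
  simp only [hdual, Finset.sum_ite_eq', Finset.mem_univ, if_true]

/-- Only the trivial character contributes to Fourier inversion modulo `|G| + 1`, and
`|G| ≡ -1`. -/
theorem card_add_one_dvd_apply_add_sum {c : G → S}
    (hc : ∀ χ : G →* Sˣ, χ ≠ 1 → (Fintype.card G + 1 : S) ∣ charSum c χ) (a : G) :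
    (Fintype.card G + 1 : S) ∣ c a + ∑ x, c x := by
  classical
  have := Fintype.ofFinite (G →* Sˣ)
  have hinv := sum_charSum_mul_inv c a
  rw [← Finset.add_sum_erase _ _ (Finset.mem_univ 1), charSum_one] at hinv
  have hrest : (Fintype.card G + 1 : S) ∣
      ∑ χ ∈ Finset.univ.erase 1, charSum c χ * χ a⁻¹ :=
    Finset.dvd_sum fun χ hχ => (hc χ (Finset.ne_of_mem_erase hχ)).mul_right _
  have hsum : c a + ∑ x, c x =
      (Fintype.card G + 1) * c a - ∑ χ ∈ Finset.univ.erase 1, charSum c χ * χ a⁻¹ := by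
    simp only [MonoidHom.one_apply, Units.val_one, mul_one] at hinv
    linear_combination hinv
  rw [hsum]
  exact dvd_sub (dvd_mul_right _ _) hrest

end CharacterSums

theorem eq_of_norm_sum_eq_card {ι E : Type*} [Fintype ι] [NormedAddCommGroup E] [NormedSpace ℝ E]
    [StrictConvexSpace ℝ E] {z : ι → E} (hz : ∀ i, ‖z i‖ = 1)
    (hsum : ‖∑ i, z i‖ = Fintype.card ι) (i j : ι) : z i = z j := by
  classical
  rcases eq_or_ne i j with rfl | hij
  · rfl
  refine eq_of_norm_eq_of_norm_add_eq ((hz i).trans (hz j).symm) ?_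
  refine (norm_add_le _ _).antisymm ?_
  have hcompl : ‖∑ k ∈ ({i, j} : Finset ι)ᶜ, z k‖ ≤ Fintype.card ι - 2 := by
    refine (norm_sum_le _ _).trans_eq ?_
    have hcard := Finset.card_add_card_compl ({i, j} : Finset ι)
    rw [Finset.card_pair hij] at hcard
    simp [hz, ← hcard]
  have htri := norm_add_le (z i + z j) (∑ k ∈ ({i, j} : Finset ι)ᶜ, z k)
  rw [← Finset.sum_pair hij, Finset.sum_add_sum_compl, hsum, Finset.sum_pair hij] at htri
  rw [hz, hz]
  linarith

/-- The quotient of the sum by the number of terms has all its conjugates in the unit disc, hence is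
a root of unity by Kronecker, so that the triangle inequality is an equality. -/
theorem eq_of_card_dvd_sum {ι F : Type*} [Fintype ι] [Field F] [NumberField F] {z : ι → 𝓞 F}
    (hz : ∀ i, IsOfFinOrder (z i)) (hdvd : (Fintype.card ι : 𝓞 F) ∣ ∑ i, z i)
    (hne : ∑ i, z i ≠ 0) (i j : ι) : z i = z j := by
  obtain ⟨w, hw⟩ := hdvd
  have hnorm : ∀ (ρ : F →+* ℂ) (k : ι), ‖ρ (z k)‖ = 1 := fun ρ k =>
    ((ρ.comp (algebraMap (𝓞 F) F)).toMonoidHom.isOfFinOrder (hz k)).norm_eq_one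
  have hsum : ∀ ρ : F →+* ℂ, ‖∑ k, ρ (z k)‖ = Fintype.card ι * ‖ρ w‖ := by
    intro ρ
    simpa using congrArg (fun y : 𝓞 F => ‖ρ y‖) hw
  have hcard : (0 : ℝ) < Fintype.card ι := by
    exact_mod_cast Fintype.card_pos_iff.mpr ⟨i⟩
  have hle : ∀ ρ : F →+* ℂ, ‖ρ w‖ ≤ 1 := by
    intro ρ
    refine le_of_mul_le_mul_left ?_ hcard
    rw [← hsum, mul_one]
    exact (norm_sum_le _ _).trans_eq (by simp [hnorm])
  have hw0 : (w : F) ≠ 0 := by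
    rw [RingOfIntegers.coe_ne_zero_iff]
    rintro rfl
    exact hne (by rw [hw, mul_zero])
  obtain ⟨m, hm, hwm⟩ :=
    NumberField.Embeddings.pow_eq_one_of_norm_le_one F ℂ hw0 w.isIntegral_coe hle
  obtain ⟨ρ⟩ : Nonempty (F →+* ℂ) := inferInstance
  have hρw : ‖ρ w‖ = 1 :=
    Complex.norm_eq_one_of_pow_eq_one (by rw [← map_pow, hwm, map_one]) hm.ne'
  apply RingOfIntegers.ext
  apply ρ.injective
  exact eq_of_norm_sum_eq_card (hnorm ρ) (by rw [hsum, hρw, mul_one]) i j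

theorem associated_smul_of_dvd {Γ R : Type*} [Group Γ] [CommRing R] [IsDedekindDomain R]
    [MulSemiringAction Γ R] {σ : Γ} {m : R}
    (hσ : ∀ P : Ideal R, P.IsPrime → m ∈ P → σ ∈ P.inertia Γ) {s : R} (hs : s ∣ m) :
    Associated (σ • s) s := by
  suffices hfix : ∀ I : Ideal R, m ∈ I → σ • I = I by
    rw [← Ideal.span_singleton_eq_span_singleton,
      ← hfix (Ideal.span {s}) (Ideal.mem_span_singleton.mpr hs), Ideal.pointwise_smul_def,
      Ideal.map_span, Set.image_singleton]
    rfl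
  intro I
  induction I using UniqueFactorizationMonoid.induction_on_prime with
  | h₁ => exact fun _ => Ideal.map_bot
  | h₂ J hJ => exact fun _ => by rw [Ideal.isUnit_iff.mp hJ]; exact Ideal.map_top _
  | h₃ J P _ hP ih =>
    intro hm
    have hPσ := hσ P (Ideal.isPrime_of_prime hP) (Ideal.mul_le_left (I := P) (J := J) hm)
    rw [smul_mul', ih (Ideal.mul_le_right (I := P) (J := J) hm),
      Ideal.inertia_le_stabilizer P hPσ]

theorem sub_mem_of_pow_eq_pow {R : Type*} [CommRing R] {P : Ideal R} [hP : P.IsPrime] {p : ℕ}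
    (hp : p.Prime) (hpP : (p : R) ∈ P) {x y : R} (h : x ^ p = y ^ p) : x - y ∈ P := by
  have := Fact.mk hp
  have : CharP (R ⧸ P) p := (CharP.charP_iff_prime_eq_zero hp).mpr <| by
    rw [← map_natCast (Ideal.Quotient.mk P), Ideal.Quotient.eq_zero_iff_mem.mpr hpP]
  rw [← Ideal.Quotient.eq]
  apply frobenius_inj (R ⧸ P) p
  rw [frobenius_def, frobenius_def, ← map_pow, ← map_pow, h]

section Cyclotomic

variable (F : Type*) [Field F] [NumberField F]

theorem hasEnoughRootsOfUnity_ringOfIntegers {m n : ℕ} [NeZero n] [IsCyclotomicExtension {n} ℚ F]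
    (hmn : m ∣ n) : HasEnoughRootsOfUnity (𝓞 F) m :=
  have : HasEnoughRootsOfUnity (𝓞 F) n :=
    ⟨⟨_, (IsCyclotomicExtension.zeta_spec n ℚ F).toInteger_isPrimitiveRoot⟩,
      rootsOfUnity.isCyclic (𝓞 F) n⟩
  .of_dvd (𝓞 F) hmn

theorem exists_gal_smul_eq_pow {n : ℕ} [NeZero n] [IsCyclotomicExtension {n} ℚ F]
    {c : ℕ} (hc : c.Coprime n) :
    ∃ σ : Gal(F/ℚ), ∀ z : 𝓞 F, z ^ n = 1 → σ • z = z ^ c := by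
  let e := IsCyclotomicExtension.Rat.galEquivZMod n F
  refine ⟨e.symm (ZMod.unitOfCoprime c hc), fun z hz => ?_⟩
  rw [IsCyclotomicExtension.Rat.galEquivZMod_smul_of_pow_eq n F _ hz, MulEquiv.apply_symm_apply,
    ZMod.coe_unitOfCoprime, ZMod.val_natCast, ← pow_eq_pow_mod c hz]

theorem exists_gal_smul_eq_pow_and_smul_eq {p v : ℕ} [NeZero (p * v)]
    [IsCyclotomicExtension {p * v} ℚ F] (hpv : p.Coprime v) {b : ℕ} (hb : b.Coprime p) :
    ∃ σ : Gal(F/ℚ), (∀ z : 𝓞 F, z ^ p = 1 → σ • z = z ^ b) ∧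
      ∀ z : 𝓞 F, z ^ v = 1 → σ • z = z := by
  obtain ⟨c, hcp, hcv⟩ := Nat.chineseRemainder hpv b 1
  have hc : c.Coprime (p * v) := by
    apply Nat.Coprime.mul_right
    · rw [Nat.Coprime, hcp.gcd_eq, hb]
    · rw [Nat.Coprime, hcv.gcd_eq, Nat.gcd_one_left]
  obtain ⟨σ, hσ⟩ := exists_gal_smul_eq_pow F hc
  refine ⟨σ, fun z hz => ?_, fun z hz => ?_⟩
  · rw [hσ z (by rw [pow_mul, hz, one_pow]), pow_eq_pow_mod c hz, hcp, ← pow_eq_pow_mod b hz]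
  · rw [hσ z (by rw [mul_comm, pow_mul, hz, one_pow]), pow_eq_pow_mod c hz, hcv,
      ← pow_eq_pow_mod 1 hz, pow_one]

variable {F}

theorem mem_inertia_of_smul_eq {p v : ℕ} [NeZero (p * v)] [IsCyclotomicExtension {p * v} ℚ F]
    (hp : p.Prime) {P : Ideal (𝓞 F)} [P.IsPrime] (hpP : (p : 𝓞 F) ∈ P) {σ : Gal(F/ℚ)}
    (hσ : ∀ z : 𝓞 F, z ^ v = 1 → σ • z = z) : σ ∈ P.inertia Gal(F/ℚ) := by
  have hζ := IsCyclotomicExtension.zeta_spec (p * v) ℚ F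
  let ζ := hζ.toInteger
  have hζ' : σ • ζ - ζ ∈ P := by
    apply sub_mem_of_pow_eq_pow hp hpP
    rw [← smul_pow', hσ]
    rw [← pow_mul, hζ.toInteger_isPrimitiveRoot.pow_eq_one]
  let π := Ideal.Quotient.mkₐ ℤ P
  have hπ : π.comp (MulSemiringAction.toAlgHom ℤ (𝓞 F) σ) = π := by
    apply AlgHom.ext_of_adjoin_eq_top (IsCyclotomicExtension.Rat.adjoin_singleton_eq_top hζ)
    rintro _ rfl
    exact Ideal.Quotient.eq.mpr hζ'
  exact fun x => Ideal.Quotient.eq.mp (DFunLike.congr_fun hπ x)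

end Cyclotomic

section Sequences

variable {G S : Type*} [CommGroup G] [Fintype G] [CommRing S]

/-- A sequence of units has ideal autocorrelation if all its correlations
`∑ x, u (a * x) * (u x)⁻¹` with `a ≠ 1` are `-1`; we include the normalization that the sequence
and its inverse sum to `-1`. -/
structure HasIdealAutocorrelation (u : G → Sˣ) : Prop where
  sum_eq : ∑ x, (u x : S) = -1
  sum_inv_eq : ∑ x, (↑(u x)⁻¹ : S) = -1
  autocorrelation_eq : ∀ a ≠ 1,
    crossCorrelation (fun x => (u x : S)) (fun x => (↑(u x)⁻¹ : S)) a = -1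

namespace HasIdealAutocorrelation

theorem charSum_mul_charSum_inv [IsDomain S] {u : G → Sˣ} (hu : HasIdealAutocorrelation u)
    {χ : G →* Sˣ} (hχ : χ ≠ 1) :
    charSum (fun x => (u x : S)) χ * charSum (fun x => (↑(u x)⁻¹ : S)) χ⁻¹ =
      Fintype.card G + 1 := by
  rw [← charSum_crossCorrelation, charSum_eq_apply_one_add_one hu.autocorrelation_eq hχ]
  simp [crossCorrelation]

variable {Γ : Type*} [Group Γ]

theorem sum_crossCorrelation_smul [MulSemiringAction Γ S] {u : G → Sˣ}
    (hu : HasIdealAutocorrelation u) (σ : Γ) :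
    ∑ a, crossCorrelation (fun x => σ • (u x : S)) (fun x => (↑(u x)⁻¹ : S)) a = 1 := by
  rw [sum_crossCorrelation, ← Finset.smul_sum, hu.sum_eq, hu.sum_inv_eq, smul_neg, smul_one,
    neg_mul_neg, one_mul]

theorem card_add_one_dvd_crossCorrelation_smul [IsDomain S] [MulSemiringAction Γ S]
    [HasEnoughRootsOfUnity S (Monoid.exponent G)] {u : G → Sˣ} (hu : HasIdealAutocorrelation u)
    {σ : Γ} (hfix : ∀ (χ : G →* Sˣ) (x : G), σ • (χ x : S) = χ x)
    (hassoc : ∀ s : S, s ∣ (Fintype.card G + 1 : S) → Associated (σ • s) s) (a : G) :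
    (Fintype.card G + 1 : S) ∣
      crossCorrelation (fun x => σ • (u x : S)) (fun x => (↑(u x)⁻¹ : S)) a + 1 := by
  suffices hdvd : ∀ χ : G →* Sˣ, χ ≠ 1 → (Fintype.card G + 1 : S) ∣
      charSum (crossCorrelation (fun x => σ • (u x : S)) (fun x => (↑(u x)⁻¹ : S))) χ by
    simpa only [hu.sum_crossCorrelation_smul σ] using card_add_one_dvd_apply_add_sum hdvd a
  intro χ hχ
  have hmul := hu.charSum_mul_charSum_inv hχ
  rw [charSum_crossCorrelation, charSum_smul (hfix χ), ← hmul]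
  exact mul_dvd_mul_right (hassoc _ (Dvd.intro _ hmul)).symm.dvd _

/-- The correlations of `σ • u` with `u` cannot all be `-1`, since their sum is `1`; where one is
not, its distance to `-1` is a nonzero multiple of `|G| + 1` which is a sum of `|G| + 1` roots of
unity. -/
theorem exists_smul_apply_mul_eq {F : Type*} [Field F] [NumberField F]
    [HasEnoughRootsOfUnity (𝓞 F) (Monoid.exponent G)] [MulSemiringAction Γ (𝓞 F)]
    {u : G → (𝓞 F)ˣ} (hu : HasIdealAutocorrelation u) (hfin : ∀ x, IsOfFinOrder (u x)) {σ : Γ}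
    (hfix : ∀ (χ : G →* (𝓞 F)ˣ) (x : G), σ • (χ x : 𝓞 F) = χ x)
    (hassoc : ∀ s : 𝓞 F, s ∣ (Fintype.card G + 1 : 𝓞 F) → Associated (σ • s) s) :
    ∃ a, ∀ x, σ • (u (a * x) : 𝓞 F) = u x := by
  have hsum : ∑ a, (crossCorrelation (fun x => σ • (u x : 𝓞 F))
      (fun x => (↑(u x)⁻¹ : 𝓞 F)) a + 1) ≠ 0 := by
    rw [Finset.sum_add_distrib, hu.sum_crossCorrelation_smul σ, add_comm, Finset.sum_const,
      nsmul_one]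
    exact Nat.cast_add_one_ne_zero _
  obtain ⟨a, -, ha⟩ := Finset.exists_ne_zero_of_sum_ne_zero hsum
  let z : Option G → 𝓞 F :=
    fun o => o.elim 1 fun x => σ • (u (a * x) : 𝓞 F) * (↑(u x)⁻¹ : 𝓞 F)
  have hz : ∀ o, IsOfFinOrder (z o) := by
    rintro (_ | x)
    · exact IsOfFinOrder.one
    · exact ((MulSemiringAction.toRingHom Γ (𝓞 F) σ).toMonoidHom.isOfFinOrder
        (Units.isOfFinOrder_val.mpr (hfin _))).mul (Units.isOfFinOrder_val.mpr (hfin x).inv)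
  have hzsum : ∑ o, z o = crossCorrelation (fun x => σ • (u x : 𝓞 F))
      (fun x => (↑(u x)⁻¹ : 𝓞 F)) a + 1 := by
    rw [Fintype.sum_option, add_comm]
    rfl
  have hdvd : (Fintype.card (Option G) : 𝓞 F) ∣ ∑ o, z o := by
    rw [hzsum, Fintype.card_option, Nat.cast_succ]
    exact hu.card_add_one_dvd_crossCorrelation_smul hfix hassoc a
  refine ⟨a, fun x => (Units.mul_inv_eq_one (u := u x)).mp ?_⟩
  exact eq_of_card_dvd_sum hz hdvd (hzsum ▸ ha) (some x) none

end HasIdealAutocorrelation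

end Sequences

section PuncturedBalance

variable {ι B : Type*}

/-- A function all of whose fibres have the same size, except that the fibre over `0` is smaller by
one: a balanced function on a group, restricted to the complement of the identity, where it took
the value `0`. -/
def IsPuncturedBalanced [Zero B] (g : ι → B) : Prop :=
  ∀ b ≠ 0, Nat.card {i // g i = b} = Nat.card {i // g i = 0} + 1

theorem IsPuncturedBalanced.exists_eq [Zero B] {g : ι → B} (hg : IsPuncturedBalanced g) {b : B}
    (hb : b ≠ 0) : ∃ i, g i = b := by
  have hpos : 0 < Nat.card {i // g i = b} := by
    rw [hg b hb]
    exact Nat.succ_pos _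
  obtain ⟨⟨i, hi⟩⟩ := (Nat.card_pos_iff.mp hpos).1
  exact ⟨i, hi⟩

theorem eq_one_of_apply_mul_eq {G : Type*} [MulOneClass G] [AddGroup B] [Nontrivial B] {f : G → B}
    (hdiff : ∀ a ≠ 1, IsPuncturedBalanced fun x => f (a * x) - f x) {a : G}
    (ha : ∀ x, f (a * x) = f x) : a = 1 := by
  by_contra hne
  obtain ⟨b, hb⟩ := exists_ne (0 : B)
  obtain ⟨x, hx⟩ := (hdiff a hne).exists_eq hb
  exact hb (hx.symm.trans (sub_eq_zero.mpr (ha x)))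

theorem IsPuncturedBalanced.sum_addChar [Fintype ι] [AddCommGroup B] [Finite B] {S : Type*}
    [CommRing S] [IsDomain S] {g : ι → B} (hg : IsPuncturedBalanced g) {φ : AddChar B Sˣ}
    (hφ : φ ≠ 1) : ∑ i, (φ (g i) : S) = -1 := by
  classical
  have := Fintype.ofFinite B
  set N := Nat.card {i // g i = 0}
  have hfiber : ∀ b, ∑ i with g i = b, (φ (g i) : S) = (N + 1) * φ b - if b = 0 then 1 else 0 := by
    intro b
    have hcard : ∑ i with g i = b, (φ (g i) : S) = Nat.card {i // g i = b} * φ b := by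
      rw [Finset.sum_congr rfl fun i hi => by rw [(Finset.mem_filter.mp hi).2], Finset.sum_const,
        nsmul_eq_mul, Nat.card_eq_fintype_card, Fintype.card_subtype]
    rw [hcard]
    split_ifs with hb
    · simp [hb, N]
    · rw [hg b hb, Nat.cast_succ, sub_zero]
  have hsum : ∑ b, (φ b : S) = 0 :=
    AddChar.sum_eq_zero_of_ne_one (ψ := (Units.coeHom S).compAddChar φ) fun h =>
      hφ <| DFunLike.ext _ _ fun b => Units.ext <| DFunLike.congr_fun h b
  rw [← Finset.sum_fiberwise Finset.univ g]
  simp only [hfiber, Finset.sum_sub_distrib, ← Finset.mul_sum, hsum]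
  simp

theorem hasIdealAutocorrelation_of_isPuncturedBalanced {G S : Type*} [CommGroup G] [Fintype G]
    [AddCommGroup B] [Finite B] [CommRing S] [IsDomain S] {φ : AddChar B Sˣ} (hφ : φ ≠ 1)
    {f : G → B} (hf : IsPuncturedBalanced f)
    (hdiff : ∀ a ≠ 1, IsPuncturedBalanced fun x => f (a * x) - f x) :
    HasIdealAutocorrelation fun x => φ (f x) where
  sum_eq := hf.sum_addChar hφ
  sum_inv_eq := by
    simpa only [AddChar.inv_apply'] using hf.sum_addChar (φ := φ⁻¹) (inv_ne_one.mpr hφ)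
  autocorrelation_eq a ha := by
    rw [← (hdiff a ha).sum_addChar hφ]
    simp only [crossCorrelation, AddChar.map_sub_eq_div, div_eq_mul_inv, Units.val_mul]

end PuncturedBalance

theorem coprime_of_add_one_eq_pow {p n v : ℕ} (h : v + 1 = p ^ n) (hv : v ≠ 0) : p.Coprime v := by
  have hn : n ≠ 0 := by
    rintro rfl
    exact hv (Nat.succ_injective h)
  refine Nat.Coprime.of_dvd_left (dvd_pow_self p hn) ?_
  rw [← h, Nat.coprime_comm, Nat.coprime_self_add_right]
  exact Nat.coprime_one_right v

section PrimeField

variable {R : Type*} [CommRing R] {p : ℕ}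

theorem exists_addChar_injective (hp : p.Prime) (hR : Nat.card R = p) {M : Type*} [CommMonoid M]
    {ζ : M} (hζ : IsPrimitiveRoot ζ p) : ∃ φ : AddChar R M, Function.Injective φ := by
  have := Nat.finite_of_card_ne_zero (hR.trans_ne hp.ne_zero)
  have := Fintype.ofFinite R
  have : NeZero p := ⟨hp.ne_zero⟩
  let e := ZMod.ringEquivOfPrime R hp (Nat.card_eq_fintype_card.symm.trans hR)
  refine ⟨(AddChar.zmodChar p hζ.pow_eq_one).compAddMonoidHom e.symm.toAddMonoidHom, ?_⟩
  intro x y h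
  apply e.symm.injective
  apply ZMod.val_injective p
  exact hζ.pow_inj (ZMod.val_lt _) (ZMod.val_lt _) h

theorem exists_coprime_natCast_eq (hp : p.Prime) (hR : Nat.card R = p) {b : R} (hb : b ≠ 0) :
    ∃ m : ℕ, m.Coprime p ∧ (m : R) = b := by
  have := Nat.finite_of_card_ne_zero (hR.trans_ne hp.ne_zero)
  have := Fintype.ofFinite R
  have : NeZero p := ⟨hp.ne_zero⟩
  let e := ZMod.ringEquivOfPrime R hp (Nat.card_eq_fintype_card.symm.trans hR)
  refine ⟨(e.symm b).val, ?_, e.symm.injective (by rw [map_natCast, ZMod.natCast_zmod_val])⟩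
  refine (Nat.coprime_of_lt_prime ?_ (ZMod.val_lt _) hp).symm
  rwa [ne_eq, ZMod.val_eq_zero, map_eq_zero_iff e.symm e.symm.injective]

end PrimeField

section Scaling

variable {G : Type*} [CommGroup G] [Finite G] {p n : ℕ}

theorem exists_smul_addChar_apply_mul_eq {F : Type*} [Field F] [NumberField F]
    [IsCyclotomicExtension {p * Nat.card G} ℚ F] [HasEnoughRootsOfUnity (𝓞 F) (Monoid.exponent G)]
    (hp : p.Prime) (hG : Nat.card G + 1 = p ^ n) {B : Type*} [AddCommGroup B] [Finite B]
    {φ : AddChar B (𝓞 F)ˣ} (hφ : φ ≠ 1) {f : G → B} (hf : IsPuncturedBalanced f)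
    (hdiff : ∀ a ≠ 1, IsPuncturedBalanced fun x => f (a * x) - f x) {σ : Gal(F/ℚ)}
    (hσ : ∀ z : 𝓞 F, z ^ Nat.card G = 1 → σ • z = z) :
    ∃ a, ∀ x, σ • (φ (f (a * x)) : 𝓞 F) = φ (f x) := by
  have := Fintype.ofFinite G
  have : NeZero (p * Nat.card G) := ⟨mul_ne_zero hp.ne_zero Nat.card_pos.ne'⟩
  have hfin : ∀ y, IsOfFinOrder (φ y) := fun y => isOfFinOrder_iff_pow_eq_one.mpr
    ⟨Nat.card B, Nat.card_pos, by
      rw [← AddChar.map_nsmul_eq_pow, card_nsmul_eq_zero', AddChar.map_zero_eq_one]⟩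
  have hfix : ∀ (χ : G →* (𝓞 F)ˣ) (x : G), σ • (χ x : 𝓞 F) = χ x := fun χ x => hσ _ <| by
    rw [← Units.val_pow_eq_pow_val, ← map_pow, pow_card_eq_one', map_one, Units.val_one]
  refine (hasIdealAutocorrelation_of_isPuncturedBalanced hφ hf hdiff).exists_smul_apply_mul_eq
    (fun x => hfin (f x)) hfix fun s hs => associated_smul_of_dvd (fun P hP hmem => ?_) hs
  refine mem_inertia_of_smul_eq hp (hP.mem_of_pow_mem n ?_) hσ
  rwa [← Nat.cast_pow, ← hG, Nat.card_eq_fintype_card, Nat.cast_succ]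

theorem exists_mul_apply_mul_eq {K : Type*} [CommRing K] (hp : p.Prime) (hK : Nat.card K = p)
    (hG : Nat.card G + 1 = p ^ n) {f : G → K} (hf : IsPuncturedBalanced f)
    (hdiff : ∀ a ≠ 1, IsPuncturedBalanced fun x => f (a * x) - f x) {b : K} (hb : b ≠ 0) :
    ∃ a, ∀ x, b * f (a * x) = f x := by
  have := Nat.finite_of_card_ne_zero (hK.trans_ne hp.ne_zero)
  have hpK : ∀ y : K, p • y = 0 := fun y => by rw [← hK, card_nsmul_eq_zero']
  have hpG : p.Coprime (Nat.card G) := coprime_of_add_one_eq_pow hG Nat.card_pos.ne'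
  have : NeZero (p * Nat.card G) := ⟨mul_ne_zero hp.ne_zero Nat.card_pos.ne'⟩
  let F := CyclotomicField (p * Nat.card G) ℚ
  have hcyc : IsCyclotomicExtension {p * Nat.card G} ℚ F :=
    CyclotomicField.isCyclotomicExtension _ _
  have : NumberField F := IsCyclotomicExtension.numberField {p * Nat.card G} ℚ F
  have hroots : ∀ m, m ∣ p * Nat.card G → HasEnoughRootsOfUnity (𝓞 F) m :=
    fun m => hasEnoughRootsOfUnity_ringOfIntegers F
  have := hroots _ (Group.exponent_dvd_nat_card.mul_left p)
  obtain ⟨ζ, hζ⟩ := (hroots p (dvd_mul_right p _)).exists_primitiveRoot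
  obtain ⟨φ, hφ⟩ := exists_addChar_injective hp hK (hζ.isUnit_unit hp.ne_zero)
  have hφ_ne_one : φ ≠ 1 := by
    rintro rfl
    exact hb (hφ rfl)
  have hφp : ∀ y, (φ y : 𝓞 F) ^ p = 1 := fun y => by
    rw [← Units.val_pow_eq_pow_val, ← AddChar.map_nsmul_eq_pow, hpK, AddChar.map_zero_eq_one,
      Units.val_one]
  obtain ⟨m, hm, rfl⟩ := exists_coprime_natCast_eq hp hK hb
  obtain ⟨σ, hσp, hσv⟩ := exists_gal_smul_eq_pow_and_smul_eq F hpG hm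
  obtain ⟨a, ha⟩ := exists_smul_addChar_apply_mul_eq hp hG hφ_ne_one hf hdiff hσv
  refine ⟨a, fun x => hφ (Units.ext ?_)⟩
  rw [← ha, hσp _ (hφp _), ← Units.val_pow_eq_pow_val, ← AddChar.map_nsmul_eq_pow, nsmul_eq_mul]

end Scaling

section Homogeneity

theorem exists_coprime_pow_eq_of_injective {G : Type*} [Group G] [IsCyclic G] [Finite G]
    {ψ : G →* G} (hψ : Function.Injective ψ) :
    ∃ d : ℕ, d.Coprime (Nat.card G) ∧ ∀ g, ψ g = g ^ d := by
  obtain ⟨γ, hγ⟩ := IsCyclic.exists_monoid_generator (α := G)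
  obtain ⟨d, hd : γ ^ d = ψ γ⟩ := hγ (ψ γ)
  refine ⟨d, ?_, fun g => ?_⟩
  · have hord : orderOf (γ ^ d) = orderOf γ := by rw [hd, orderOf_injective ψ hψ]
    rw [orderOf_pow, Nat.div_eq_self] at hord
    rw [Nat.coprime_comm, ← orderOf_eq_card_of_forall_mem_powers hγ]
    exact hord.resolve_left (orderOf_pos γ).ne'
  · obtain ⟨k, rfl⟩ := hγ g
    simp only [map_pow, ← hd, ← pow_mul, mul_comm]

variable {K L : Type*} [Field K] [Finite K] [Field L] [Algebra K L]

theorem exists_algebraMap_eq_of_pow_card_units_eq_one {a : L} (ha : a ^ Nat.card Kˣ = 1) :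
    ∃ c : Kˣ, algebraMap K L c = a := by
  obtain ⟨γ, hγ⟩ := IsCyclic.exists_monoid_generator (α := Kˣ)
  have hprim : IsPrimitiveRoot (algebraMap K L γ) (Nat.card Kˣ) := by
    rw [← orderOf_eq_card_of_forall_mem_powers hγ]
    exact (IsPrimitiveRoot.coe_units_iff.mpr (IsPrimitiveRoot.orderOf γ)).map_of_injective
      (algebraMap K L).injective
  have : NeZero (Nat.card Kˣ) := ⟨Nat.card_pos.ne'⟩
  obtain ⟨k, -, hk⟩ := hprim.eq_pow_of_pow_eq_one ha
  exact ⟨γ ^ k, by rw [Units.val_pow_eq_pow_val, map_pow, hk]⟩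

theorem exists_smul_eq_mul_of_mul_apply_mul_eq {f : Lˣ → K}
    (hfaithful : ∀ a : Lˣ, (∀ x, f (a * x) = f x) → a = 1) {a : Lˣ} {b : Kˣ}
    (ha : ∀ x, b * f (a * x) = f x) : ∃ c : Kˣ, ∀ x : Lˣ, c • x = a * x := by
  have hpow : ∀ k x, (b : K) ^ k * f (a ^ k * x) = f x := by
    intro k
    induction k with
    | zero => simp
    | succ k ih =>
      intro x
      rw [pow_succ, pow_succ', mul_assoc a, mul_assoc, ha, ih]
  have ha_pow : a ^ Nat.card Kˣ = 1 := hfaithful _ fun x => by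
    rw [← hpow (Nat.card Kˣ) x, ← Units.val_pow_eq_pow_val, pow_card_eq_one', Units.val_one,
      one_mul]
  obtain ⟨c, hc⟩ := exists_algebraMap_eq_of_pow_card_units_eq_one (K := K) (a := (a : L)) <| by
    rw [← Units.val_pow_eq_pow_val, ha_pow, Units.val_one]
  refine ⟨c, fun x => Units.ext ?_⟩
  rw [Units.val_mul, ← hc, Units.val_smul, Units.smul_def, Algebra.smul_def]

theorem exists_apply_smul_eq_mul {f : Lˣ → K}
    (hscale : ∀ b : Kˣ, ∃ a : Lˣ, ∀ x, b * f (a * x) = f x)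
    (hfaithful : ∀ a : Lˣ, (∀ x, f (a * x) = f x) → a = 1) (hne : ∃ x, f x ≠ 0) (c : Kˣ) :
    ∃ b : Kˣ, ∀ x, f (c • x) = b * f x := by
  have hscalar : ∀ b : Kˣ, ∃ c : Kˣ, ∀ x, b * f (c • x) = f x := by
    intro b
    obtain ⟨a, ha⟩ := hscale b
    obtain ⟨c, hc⟩ := exists_smul_eq_mul_of_mul_apply_mul_eq hfaithful ha
    exact ⟨c, fun x => by rw [hc, ha]⟩
  choose s hs using hscalar
  have hs_inj : Function.Injective s := by
    intro b b' hbb'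
    obtain ⟨x, hx⟩ := hne
    have hsx : f (s b • x) ≠ 0 := right_ne_zero_of_mul ((hs b x).trans_ne hx)
    exact Units.ext (mul_right_cancel₀ hsx (by rw [hs, hbb', hs]))
  obtain ⟨b, rfl⟩ := Finite.surjective_of_injective hs_inj c
  exact ⟨b⁻¹, fun x => by rw [← hs b x, Units.inv_mul_cancel_left]⟩

theorem exists_coprime_pow_of_apply_smul_eq_mul {X : Type*} [MulAction Kˣ X] {f : X → K}
    (hscalar : ∀ c : Kˣ, ∃ b : Kˣ, ∀ x, f (c • x) = b * f x)
    (hfaithful : ∀ c : Kˣ, (∀ x, f (c • x) = f x) → c = 1) (hne : ∃ x, f x ≠ 0) :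
    ∃ d : ℕ, d.Coprime (Nat.card Kˣ) ∧ ∀ (c : Kˣ) x, f (c • x) = c ^ d * f x := by
  choose s hs using hscalar
  obtain ⟨x, hx⟩ := hne
  let ψ : Kˣ →* Kˣ := MonoidHom.mk' s fun c c' => Units.ext <| mul_right_cancel₀ hx <| by
    rw [← hs, mul_smul, hs, hs, Units.val_mul, mul_assoc]
  have hψ : Function.Injective ψ := (injective_iff_map_eq_one ψ).mpr fun c hc =>
    hfaithful c fun x => by
      have hsc : s c = 1 := hc
      rw [hs, hsc, Units.val_one, one_mul]
  obtain ⟨d, hd, hψd⟩ := exists_coprime_pow_eq_of_injective hψ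
  refine ⟨d, hd, fun c x => ?_⟩
  rw [hs, ← Units.val_pow_eq_pow_val, ← hψd]
  rfl

theorem exists_coprime_apply_smul_eq_pow_mul {f : Lˣ → K}
    (hscale : ∀ b : Kˣ, ∃ a : Lˣ, ∀ x, b * f (a * x) = f x)
    (hfaithful : ∀ a : Lˣ, (∀ x, f (a * x) = f x) → a = 1) (hne : ∃ x, f x ≠ 0) :
    ∃ d : ℕ, d.Coprime (Nat.card Kˣ) ∧ ∀ (c : Kˣ) x, f (c • x) = c ^ d * f x := by
  refine exists_coprime_pow_of_apply_smul_eq_mul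
    (exists_apply_smul_eq_mul hscale hfaithful hne) (fun c hc => ?_) hne
  have hmul : ∀ x, c • (1 : Lˣ) * x = c • x := fun x => Units.ext <| by
    rw [Units.val_mul, Units.val_smul, Units.val_smul, smul_mul_assoc, Units.val_one, one_mul]
  have hc_smul : c • (1 : Lˣ) = 1 := hfaithful _ fun x => by rw [hmul, hc]
  have hc_map : algebraMap K L c = 1 := by
    simpa [Units.smul_def, Algebra.smul_def] using congrArg Units.val hc_smul
  exact Units.ext <| (algebraMap K L).injective <| by rw [hc_map, Units.val_one, map_one]

end Homogeneity

theorem IsBalanced.isPuncturedBalanced {K L : Type*} [Field K] [Field L] {q n : ℕ} (hq : 0 < q)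
    {f : L → K} (hf : IsBalanced q n f) : IsPuncturedBalanced fun x : Lˣ => f x := by
  have hcard : ∀ b, Nat.card {x : Lˣ // f x = b} = Nat.card {x : L | x ≠ 0 ∧ f x = b} := by
    intro b
    refine Nat.card_congr ?_
    refine (unitsEquivNeZero.subtypeEquiv (q := fun x : {x : L // x ≠ 0} => f x = b)
      fun _ => Iff.rfl).trans ?_
    exact Equiv.subtypeSubtypeEquivSubtypeInter (fun x : L => x ≠ 0) fun x => f x = b
  intro b hb
  rw [hcard, hcard, hf.1, hf.2 b hb, Nat.sub_add_cancel (Nat.pow_pos hq)]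

/-- Gong–Song conjecture for `q = p` prime: every balanced difference balanced
function `f : L∖{0} → 𝔽_p` is `d`-homogeneous. -/
theorem stmt_13 {K L : Type*} [Field K] [Field L] [Algebra K L] [Fintype K] [Fintype L]
    (p n : ℕ) (hp : p.Prime) (hodd : Odd p) (hn : 1 ≤ n)
    (hK : Fintype.card K = p) (hL : Fintype.card L = p ^ n)
    (f : L → K) (hdb : IsDiffBalanced p n f) (hbal : IsBalanced p n f) :
    ∃ d : ℕ, IsDHomogeneous p d f := by
  let g : Lˣ → K := fun x => f x
  have hg : IsPuncturedBalanced g := hbal.isPuncturedBalanced hp.pos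
  have hdiff : ∀ a ≠ 1, IsPuncturedBalanced fun x => g (a * x) - g x := fun a ha =>
    (hdb a a.ne_zero (Units.val_eq_one.not.mpr ha)).isPuncturedBalanced hp.pos
  have hcardK : Nat.card K = p := Nat.card_eq_fintype_card.trans hK
  have hcardL : Nat.card Lˣ + 1 = p ^ n := by
    rw [Nat.card_units, Nat.card_eq_fintype_card, hL, Nat.sub_add_cancel (Nat.pow_pos hp.pos)]
  have hscale : ∀ b : Kˣ, ∃ a : Lˣ, ∀ x, b * g (a * x) = g x := fun b =>
    exists_mul_apply_mul_eq hp hcardK hcardL hg hdiff b.ne_zero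
  obtain ⟨x, hx⟩ : ∃ x, g x = 1 := hg.exists_eq one_ne_zero
  obtain ⟨d, hd, hhom⟩ := exists_coprime_apply_smul_eq_pow_mul hscale
    (fun a => eq_one_of_apply_mul_eq hdiff) ⟨x, hx.trans_ne one_ne_zero⟩
  rw [Nat.card_units, hcardK] at hd
  refine ⟨d, hd, fun c hc x hx => ?_⟩
  simpa [g, Units.smul_def, Algebra.smul_def] using hhom (Units.mk0 c hc) (Units.mk0 x hx)
end

section
/- Let p be an odd prime and n ≥ 2. Let L be a finite field with |L| = p^n and K = 𝔽_p. If f : L∖{0} → K is difference balanced and balanced, then f is two-tuple balanced. -/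
/-!
Extend `f` to all of `L` by `f 0 = 0`; being balanced and difference balanced then says that
`x ↦ f (a * x) - f x` is equidistributed for every `a ≠ 1`. Let `ψ` be a nontrivial additive
character of `K` and `t ∈ K`, `t ≠ 0`. For a nontrivial multiplicative character `χ` of `L`, the
sums `∑ χ x * ψ (f x)` and `∑ χ⁻¹ y * ψ (-f y)` have product `|L| = p ^ n`. The Galois automorphism
`σ` which fixes the values of `χ` and sends `ψ` to `ψ (t * ·)` lies in the inertia group of every
prime above `p`, so it fixes every ideal dividing `p ^ n`; hence `∑ χ x * ψ (f x)` times
`∑ χ⁻¹ y * ψ (-(t * f y))` is divisible by `|L|` as well. By Fourier inversion `|L|` divides each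
correlation `∑ ψ (f (a * y) - t * f y)`. This is a sum of `|L|` roots of unity, so it vanishes
unless all its terms agree, and summing over `a` shows that some correlation is nonzero: that `a`
satisfies `f (a * x) = t * f x` for all `x`. Then `a ^ p = a`, i.e. `a ∈ K`. Consequently
`f (a * x) - s * f x` is equidistributed for all `s ∈ K` and `a ∉ K`, and counting points on lines
in `K × K` gives the equidistribution of `(f x, f (a * x))`.
-/

section Equidistribution

variable {X Y A B : Type*}

/-- A function between finite types is equidistributed if every fiber has the same size
`|X| / |A|`. -/
def IsEquidistributed (h : X → A) : Prop :=
  ∀ b, Nat.card A * Nat.card {x // h x = b} = Nat.card X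

namespace IsEquidistributed

theorem comp_equiv {h : X → A} (hh : IsEquidistributed h) (e : Y ≃ X) :
    IsEquidistributed (h ∘ e) := fun b => by
  rw [Nat.card_congr e, ← hh b]
  exact congrArg _ (Nat.card_congr (e.subtypeEquiv fun _ => Iff.rfl))

theorem equiv_comp {h : X → A} (hh : IsEquidistributed h) (e : A ≃ B) :
    IsEquidistributed (e ∘ h) := fun b => by
  rw [← Nat.card_congr e, ← hh (e.symm b)]
  simp only [Function.comp_apply, e.eq_symm_apply]

theorem surjective [Finite X] [Nonempty X] {h : X → A} (hh : IsEquidistributed h) :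
    Function.Surjective h := fun b => by
  have hfiber : Nat.card {x // h x = b} ≠ 0 :=
    right_ne_zero_of_mul (hh b ▸ Nat.card_pos.ne')
  obtain ⟨⟨x, hx⟩⟩ := (Nat.card_ne_zero.1 hfiber).1
  exact ⟨x, hx⟩

theorem sum_addChar_comp_eq_zero [Fintype X] [AddGroup A] [Finite A] {O : Type*} [CommRing O]
    [IsDomain O] {h : X → A} (hh : IsEquidistributed h) {ψ : AddChar A O} (hψ : ψ ≠ 1) :
    ∑ x, ψ (h x) = 0 := by
  classical
  have := Fintype.ofFinite A
  have hcard : ∀ b, Fintype.card {x // h x = b} = Fintype.card {x // h x = 0} := fun b =>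
    Nat.eq_of_mul_eq_mul_left (Nat.card_pos (α := A)) (by
      simpa only [Nat.card_eq_fintype_card] using (hh b).trans (hh 0).symm)
  calc ∑ x, ψ (h x) = ∑ b, ∑ x : {x // h x = b}, ψ (h x) :=
        (Fintype.sum_fiberwise h fun x => ψ (h x)).symm
    _ = ∑ b, (Fintype.card {x // h x = 0} : O) * ψ b := by
        refine Fintype.sum_congr _ _ fun b => ?_
        rw [Fintype.sum_congr _ (fun _ => ψ b) fun x => congrArg ψ x.2]
        simp only [Finset.sum_const, Finset.card_univ, nsmul_eq_mul, hcard]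
    _ = 0 := by rw [← Finset.mul_sum, AddChar.sum_eq_zero_of_ne_one hψ, mul_zero]

end IsEquidistributed

theorem card_slope_add_ite {K : Type*} [Field K] [Fintype K] [DecidableEq K] (c₁ c₂ : K) :
    Fintype.card {s // c₂ = s * c₁} + (if c₁ = 0 then 1 else 0) =
      1 + Fintype.card K * (if c₁ = 0 ∧ c₂ = 0 then 1 else 0) := by
  by_cases h₁ : c₁ = 0
  · by_cases h₂ : c₂ = 0 <;> simp [h₁, h₂, add_comm]
  · have hslope : ∀ s, c₂ = s * c₁ ↔ s = c₂ / c₁ := fun s => by rw [eq_div_iff h₁, eq_comm]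
    simp [h₁, hslope]

/-- Count the pairs `(s, x)` for which `(u x, v x)` lies on the line of slope `s` through
`(b₁, b₂)`. -/
theorem IsEquidistributed.prodMk [Finite X] {K : Type*} [Field K] [Finite K] {u v : X → K}
    (hu : IsEquidistributed u) (huv : ∀ s : K, IsEquidistributed fun x => v x - s * u x) :
    IsEquidistributed fun x => (u x, v x) := by
  classical
  have := Fintype.ofFinite X
  have := Fintype.ofFinite K
  rintro ⟨b₁, b₂⟩
  have hcount : ∑ s, Fintype.card {x // v x - s * u x = b₂ - s * b₁} +
      Fintype.card {x // u x = b₁} =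
        Fintype.card X + Fintype.card K * Fintype.card {x // (u x, v x) = (b₁, b₂)} := by
    have hswap : ∑ s, Fintype.card {x // v x - s * u x = b₂ - s * b₁} =
        ∑ x, Fintype.card {s // v x - b₂ = s * (u x - b₁)} := by
      simp only [Fintype.card_subtype, Finset.card_filter]
      rw [Finset.sum_comm]
      refine Fintype.sum_congr _ _ fun x => Fintype.sum_congr _ _ fun s => if_congr ?_ rfl rfl
      rw [mul_sub, sub_eq_sub_iff_sub_eq_sub]
    have hslopes := Fintype.sum_congr _ _ fun x => card_slope_add_ite (u x - b₁) (v x - b₂)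
    simpa only [Finset.sum_add_distrib, ← hswap, ← Finset.mul_sum, sub_eq_zero,
      ← Finset.card_filter, ← Fintype.card_subtype, Finset.sum_const, Finset.card_univ,
      smul_eq_mul, mul_one, Prod.mk.injEq] using hslopes
  have hlines : Fintype.card K * ∑ s, Fintype.card {x // v x - s * u x = b₂ - s * b₁} =
      Fintype.card K * Fintype.card X := by
    simpa [Finset.mul_sum] using Fintype.sum_congr _ _ fun s => huv s (b₂ - s * b₁)
  have hfiber := hu b₁
  simp only [Nat.card_eq_fintype_card, Fintype.card_prod] at hfiber ⊢
  linear_combination hlines + hfiber - Fintype.card K * hcount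

end Equidistribution

section RootsOfUnity

theorem eq_of_norm_sum_eq_sum_norm {ι E : Type*} [Fintype ι] [NormedAddCommGroup E]
    [NormedSpace ℝ E] [StrictConvexSpace ℝ E] {z : ι → E} {r : ℝ} (hz : ∀ i, ‖z i‖ = r)
    (hsum : ‖∑ i, z i‖ = Fintype.card ι * r) (i j : ι) : z i = z j := by
  classical
  by_contra hne
  have hij : i ≠ j := fun h => hne (congrArg z h)
  have hlt : ‖z i + z j‖ < ‖z i‖ + ‖z j‖ := norm_add_lt_of_not_sameRay fun h =>
    hne ((sameRay_iff_of_norm_eq ((hz i).trans (hz j).symm)).1 h)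
  refine lt_irrefl (∑ k, ‖z k‖) ?_
  calc ∑ k, ‖z k‖ = ‖∑ k, z k‖ := by simp [hsum, hz]
    _ = ‖z i + z j + ∑ k ∈ {i, j}ᶜ, z k‖ := by
        rw [← Finset.sum_add_sum_compl {i, j}, Finset.sum_pair hij]
    _ < ‖z i‖ + ‖z j‖ + ∑ k ∈ {i, j}ᶜ, ‖z k‖ :=
        (norm_add_le _ _).trans_lt (add_lt_add_of_lt_of_le hlt (norm_sum_le _ _))
    _ = ∑ k, ‖z k‖ := by rw [← Finset.sum_add_sum_compl {i, j} fun k => ‖z k‖, Finset.sum_pair hij]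

open NumberField in
/-- The quotient of the sum by the number of terms has all its conjugates in the closed unit
disc, so by Kronecker it is zero or a root of unity. -/
theorem sum_eq_zero_or_forall_eq_of_card_dvd_sum {E ι : Type*} [Field E] [NumberField E]
    [Fintype ι] {z : ι → 𝓞 E} (hz : ∀ i, IsOfFinOrder (z i))
    (hdvd : (Fintype.card ι : 𝓞 E) ∣ ∑ i, z i) :
    ∑ i, z i = 0 ∨ ∀ i j, z i = z j := by
  obtain ⟨α, hα⟩ := hdvd
  rcases eq_or_ne α 0 with rfl | hα0
  · exact Or.inl (hα.trans (mul_zero _))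
  refine Or.inr fun i j => ?_
  have hcard : (0 : ℝ) < Fintype.card ι := Nat.cast_pos.2 (Fintype.card_pos_iff.2 ⟨i⟩)
  have hnorm (φ : E →+* ℂ) (k : ι) : ‖φ (z k)‖ = 1 :=
    ((φ.comp (algebraMap (𝓞 E) E)).toMonoidHom.isOfFinOrder (hz k)).norm_eq_one
  have hsum (φ : E →+* ℂ) : ‖∑ k, φ (z k)‖ = Fintype.card ι * ‖φ α‖ := by
    have h := congrArg (fun x : 𝓞 E => ‖φ x‖) hα
    simpa using h
  have hle (φ : E →+* ℂ) : ‖φ α‖ ≤ 1 := by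
    refine le_of_mul_le_mul_left ?_ hcard
    rw [← hsum, mul_one]
    exact (norm_sum_le _ _).trans (by simp [hnorm])
  obtain ⟨m, hm, hαm⟩ := Embeddings.pow_eq_one_of_norm_le_one E ℂ
    (RingOfIntegers.coe_ne_zero_iff.2 hα0) α.isIntegral_coe hle
  obtain ⟨φ⟩ := (inferInstance : Nonempty (E →+* ℂ))
  have hα1 : ‖φ α‖ = 1 := ((φ : E →* ℂ).isOfFinOrder
    (isOfFinOrder_iff_pow_eq_one.2 ⟨m, hm, hαm⟩)).norm_eq_one
  exact RingOfIntegers.coe_injective (φ.injective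
    (eq_of_norm_sum_eq_sum_norm (hnorm φ) (by rw [hsum, hα1]) i j))

end RootsOfUnity

section Inertia

theorem associated_map_of_dvd_pow {O : Type*} [CommRing O] [IsDedekindDomain O]
    (σ : O ≃+* O) {q a : O} {k : ℕ}
    (hσ : ∀ P : Ideal O, P.IsPrime → q ∈ P → ∀ x, σ x - x ∈ P) (ha : a ∣ q ^ k) :
    Associated (σ a) a := by
  have map_eq : ∀ I : Ideal O, I ∣ Ideal.span {q ^ k} → I.map σ = I := by
    intro I
    induction I using UniqueFactorizationMonoid.induction_on_prime with
    | h₁ => exact fun _ => Ideal.map_bot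
    | h₂ I hI => exact fun _ => by rw [Ideal.isUnit_iff.1 hI, Ideal.map_top]
    | h₃ I P _ hP ih =>
      intro hPI
      have hPprime : P.IsPrime := Ideal.isPrime_of_prime hP
      have hqP : q ∈ P := hPprime.mem_of_pow_mem k <|
        Ideal.le_of_dvd ((dvd_mul_right P I).trans hPI) (Ideal.mem_span_singleton_self _)
      have mem_iff : ∀ x, σ x ∈ P ↔ x ∈ P := fun x => by
        simpa using P.add_mem_iff_right (hσ P hPprime hqP x) (b := x)
      rw [Ideal.map_mul, ih ((dvd_mul_left I P).trans hPI)]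
      congr 1
      refine le_antisymm (Ideal.map_le_iff_le_comap.2 fun x hx => (mem_iff x).2 hx) fun x hx => ?_
      rw [← σ.apply_symm_apply x] at hx ⊢
      exact Ideal.mem_map_of_mem σ ((mem_iff _).1 hx)
  have hspan := map_eq (Ideal.span {a}) (by
    rwa [Ideal.dvd_span_singleton, Ideal.mem_span_singleton])
  rw [Ideal.map_span, Set.image_singleton] at hspan
  exact Ideal.span_singleton_eq_span_singleton.1 hspan

theorem map_sub_self_mem_of_pow_eq_one {O : Type*} [CommRing O] {η : O} {N p s : ℕ}
    (hp : p.Prime) (hη : Algebra.adjoin ℤ {η} = ⊤) (hηpow : η ^ (N * p) = 1) (hs : s ≡ 1 [MOD N])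
    {σ : O →+* O} (hση : σ η = η ^ s) {P : Ideal O} (hP : P.IsPrime) (hpP : (p : O) ∈ P) (x : O) :
    σ x - x ∈ P := by
  have : Fact p.Prime := ⟨hp⟩
  have : CharP (O ⧸ P) p := (CharP.charP_iff_prime_eq_zero hp).2 <| by
    rw [← map_natCast (Ideal.Quotient.mk P), Ideal.Quotient.eq_zero_iff_mem.2 hpP]
  let π := Ideal.Quotient.mk P
  have hπη : π η ^ N = 1 := by
    rw [← ExpChar.pow_prime_pow_mul_eq_one_iff p 1 N, pow_one, mul_comm, ← map_pow, hηpow, map_one]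
  have hmod : ((π.comp σ).toIntAlgHom : O →ₐ[ℤ] O ⧸ P) = π.toIntAlgHom := by
    refine AlgHom.ext_of_adjoin_eq_top hη ?_
    rintro y (hy : y = η)
    change π (σ y) = π y
    rw [hy, hση, map_pow, pow_eq_pow_of_modEq hs hπη, pow_one]
  exact Ideal.Quotient.eq.1 (DFunLike.congr_fun hmod x)

open NumberField in
/-- The automorphism raising roots of unity to a power `s ≡ 1 [MOD N]`, `s ≡ t [MOD p]`, lies in
the inertia group of every prime above `p`. -/
theorem exists_ringEquiv_associated_of_dvd_pow {N p : ℕ} [NeZero (N * p)] (hp : p.Prime)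
    (hNp : N.Coprime p) (E : Type*) [Field E] [NumberField E] [IsCyclotomicExtension {N * p} ℚ E]
    {t : ℕ} (ht : t.Coprime p) :
    ∃ σ : 𝓞 E ≃+* 𝓞 E, (∀ x, x ^ N = 1 → σ x = x) ∧ (∀ x, x ^ p = 1 → σ x = x ^ t) ∧
      ∀ (a : 𝓞 E) (k : ℕ), a ∣ (p : 𝓞 E) ^ k → Associated (σ a) a := by
  obtain ⟨s, hsN, hsp⟩ := Nat.chineseRemainder hNp 1 t
  have hs : s.Coprime (N * p) := Nat.Coprime.mul_right
    (hsN.gcd_eq.trans (Nat.gcd_one_left N)) (hsp.gcd_eq.trans ht)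
  let τ : Gal(E/ℚ) := (IsCyclotomicExtension.Rat.galEquivZMod (N * p) E).symm
    (ZMod.unitOfCoprime s hs)
  have hτ {x : 𝓞 E} (hx : x ^ (N * p) = 1) : τ • x = x ^ s := by
    rw [IsCyclotomicExtension.Rat.galEquivZMod_smul_of_pow_eq _ _ _ hx, MulEquiv.apply_symm_apply,
      ZMod.coe_unitOfCoprime, ZMod.val_natCast, ← pow_eq_pow_mod _ hx]
  let σ : 𝓞 E ≃+* 𝓞 E := MulSemiringAction.toRingEquiv Gal(E/ℚ) (𝓞 E) τ
  have hζ := IsCyclotomicExtension.zeta_spec (N * p) ℚ E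
  have hη : hζ.toInteger ^ (N * p) = 1 := hζ.toInteger_isPrimitiveRoot.pow_eq_one
  refine ⟨σ, fun x hx => ?_, fun x hx => ?_, fun a k => associated_map_of_dvd_pow σ ?_⟩
  · exact (hτ (by rw [pow_mul, hx, one_pow])).trans <| by
      rw [pow_eq_pow_of_modEq hsN hx, pow_one]
  · exact (hτ (by rw [pow_mul', hx, one_pow])).trans (pow_eq_pow_of_modEq hsp hx)
  · exact fun P hP hpP => map_sub_self_mem_of_pow_eq_one (σ := σ.toRingHom) hp
      (IsCyclotomicExtension.Rat.adjoin_singleton_eq_top hζ) hη hsN (hτ hη) hP hpP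

end Inertia

section Characters

variable {M O : Type*} [CommRing O] [IsDomain O]

theorem sum_mulChar_apply_eq_zero [CommMonoid M] [Finite M]
    [HasEnoughRootsOfUnity O (Monoid.exponent Mˣ)] [Fintype (MulChar M O)] {a : M} (ha : a ≠ 1) :
    ∑ χ : MulChar M O, χ a = 0 := by
  obtain ⟨χ, hχ⟩ := MulChar.exists_apply_ne_one_of_hasEnoughRootsOfUnity M O ha
  refine eq_zero_of_mul_eq_self_left hχ ?_
  simp only [Finset.mul_sum, ← MulChar.mul_apply]
  exact Fintype.sum_bijective _ (Group.mulLeft_bijective χ) _ _ fun _ => rfl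

theorem dvd_card_units_mul_of_forall_dvd_sum_mulChar [CommMonoid M] [Fintype M]
    [HasEnoughRootsOfUnity O (Monoid.exponent Mˣ)] {d : O} {e : M → O}
    (h : ∀ χ : MulChar M O, d ∣ ∑ a, χ a * e a) (b : Mˣ) : d ∣ Nat.card Mˣ * e b := by
  classical
  have := Fintype.ofFinite (MulChar M O)
  have horth (a : M) :
      ∑ χ : MulChar M O, χ ↑b⁻¹ * χ a = if a = b then (Nat.card Mˣ : O) else 0 := by
    simp only [← map_mul]
    split_ifs with hab
    · rw [← MulChar.card_eq_card_units_of_hasEnoughRootsOfUnity M O]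
      simp [hab]
    · exact sum_mulChar_apply_eq_zero fun h => hab ((Units.inv_mul_eq_one).1 h).symm
  have hinv : ∑ χ : MulChar M O, χ ↑b⁻¹ * ∑ a, χ a * e a = Nat.card Mˣ * e b := by
    simp only [Finset.mul_sum, ← mul_assoc]
    rw [Finset.sum_comm]
    simp [← Finset.sum_mul, horth]
  exact hinv ▸ Finset.dvd_sum fun χ _ => (h χ).mul_left _

theorem sum_mulChar_mul_sum_inv [CommGroupWithZero M] [Fintype M] {χ : MulChar M O} (hχ : χ ≠ 1)
    (u v : M → O) :
    (∑ x, χ x * u x) * ∑ y, χ⁻¹ y * v y = ∑ a, χ a * ∑ y, u (a * y) * v y := by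
  have hshift (y : M) : ∑ a, χ a * u (a * y) = χ⁻¹ y * ∑ x, χ x * u x := by
    rcases eq_or_ne y 0 with rfl | hy
    · simp only [mul_zero, ← Finset.sum_mul, MulChar.sum_eq_zero_of_ne_one hχ, zero_mul,
        MulChar.map_zero]
    · rw [← Equiv.sum_comp (Equiv.mulRight₀ y hy : M ≃ M) fun x => χ x * u x, Finset.mul_sum]
      refine Fintype.sum_congr _ _ fun a => ?_
      have hχy : χ⁻¹ y * χ y = 1 := by
        rw [← MulChar.mul_apply, inv_mul_cancel, MulChar.one_apply hy.isUnit]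
      rw [Equiv.mulRight₀_apply, map_mul]
      linear_combination -(χ a * u (a * y)) * hχy
  calc (∑ x, χ x * u x) * ∑ y, χ⁻¹ y * v y = ∑ y, (∑ a, χ a * u (a * y)) * v y := by
        rw [Finset.mul_sum]
        exact Fintype.sum_congr _ _ fun y => by rw [hshift]; ring
    _ = ∑ a, χ a * ∑ y, u (a * y) * v y := by
        simp only [Finset.sum_mul, Finset.mul_sum, mul_assoc]
        exact Finset.sum_comm

theorem exists_addChar_injective_s14 {R : Type*} [CommMonoid R] {K : Type*} [Ring K] [Fintype K]
    (hK : (Fintype.card K).Prime) {ζ : R} (hζ : IsPrimitiveRoot ζ (Fintype.card K)) :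
    ∃ ψ : AddChar K R, Function.Injective ψ := by
  have : NeZero (Fintype.card K) := ⟨hK.ne_zero⟩
  let φ := ZMod.ringEquivOfPrime K hK rfl
  refine ⟨(AddChar.zmodChar _ hζ.pow_eq_one).compAddMonoidHom φ.symm.toAddMonoidHom,
    fun a b hab => φ.symm.injective (ZMod.val_injective _ ?_)⟩
  exact hζ.pow_inj (ZMod.val_lt _) (ZMod.val_lt _) hab

theorem addChar_apply_pow_card {A M : Type*} [AddGroup A] [Monoid M] (ψ : AddChar A M)
    (a : A) : ψ a ^ Nat.card A = 1 := by
  rw [← AddChar.map_nsmul_eq_pow, card_nsmul_eq_zero', AddChar.map_zero_eq_one]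

theorem exists_natCast_eq_of_prime_card {K : Type*} [Ring K] [Fintype K]
    (hK : (Fintype.card K).Prime) (t : K) : ∃ k : ℕ, (k : K) = t := by
  have : NeZero (Fintype.card K) := ⟨hK.ne_zero⟩
  let φ := ZMod.ringEquivOfPrime K hK rfl
  exact ⟨(φ.symm t).val, by
    rw [← map_natCast φ, ZMod.natCast_zmod_val, φ.apply_symm_apply]⟩

end Characters

open NumberField in
theorem exists_ringEquiv_addChar_mulChar (L : Type*) {K E : Type*} [CommMonoid L] [Fintype Lˣ]
    [Field K] [Fintype K] [Field E] [NumberField E]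
    [IsCyclotomicExtension {Fintype.card Lˣ * Fintype.card K} ℚ E] (hK : (Fintype.card K).Prime)
    (hcoprime : (Fintype.card Lˣ).Coprime (Fintype.card K)) (ψ : AddChar K (𝓞 E)) {t : K}
    (ht : t ≠ 0) :
    ∃ σ : 𝓞 E ≃+* 𝓞 E, (∀ b, σ (ψ b) = ψ (t * b)) ∧ (∀ (χ : MulChar L (𝓞 E)) a, σ (χ a) = χ a) ∧
      ∀ (a : 𝓞 E) (k : ℕ), a ∣ (Fintype.card K : 𝓞 E) ^ k → Associated (σ a) a := by
  have : NeZero (Fintype.card Lˣ * Fintype.card K) :=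
    ⟨mul_ne_zero Fintype.card_ne_zero hK.ne_zero⟩
  obtain ⟨k, rfl⟩ := exists_natCast_eq_of_prime_card hK t
  have hk : k.Coprime (Fintype.card K) := by
    refine ((Nat.Prime.coprime_iff_not_dvd hK).2 fun ⟨m, hm⟩ => ht ?_).symm
    rw [hm, Nat.cast_mul, Nat.cast_card_eq_zero, zero_mul]
  obtain ⟨σ, hσL, hσK, hσ⟩ := exists_ringEquiv_associated_of_dvd_pow hK hcoprime E hk
  refine ⟨σ, fun b => ?_, fun χ a => ?_, hσ⟩
  · rw [hσK _ (Nat.card_eq_fintype_card (α := K) ▸ addChar_apply_pow_card ψ b), ← nsmul_eq_mul,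
      AddChar.map_nsmul_eq_pow]
  · by_cases ha : IsUnit a
    · obtain ⟨a, rfl⟩ := ha
      refine hσL _ ?_
      rw [← map_pow, ← Units.val_pow_eq_pow_val, pow_card_eq_one, Units.val_one, map_one]
    · rw [χ.map_nonunit ha, map_zero]

section Multipliers

/-- A function vanishing at `0` whose differences `f (a * x) - f x` take every value equally often.
Taking `a = 0` shows that `f` itself is equidistributed, so this is the notion of a balanced
difference balanced function on `L ∖ {0}`, extended by zero. -/
structure IsDiffEquidistributed {L K : Type*} [MulZeroOneClass L] [AddGroup K] (f : L → K) :
    Prop where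
  apply_zero : f 0 = 0
  diff : ∀ a, a ≠ 1 → IsEquidistributed fun x => f (a * x) - f x

/-- The exponential sum comparing the dilate `y ↦ f (a * y)` with the multiple `t • f`. -/
def correlation {L K O : Type*} [Mul L] [Fintype L] [Ring K] [CommRing O] (ψ : AddChar K O)
    (f : L → K) (t : K) (a : L) : O :=
  ∑ y, ψ (f (a * y) - t * f y)

theorem sum_mulChar_mul_correlation {L K O : Type*} [CommGroupWithZero L] [Fintype L] [Ring K]
    [CommRing O] [IsDomain O] (ψ : AddChar K O) (f : L → K) (t : K) {χ : MulChar L O}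
    (hχ : χ ≠ 1) :
    ∑ a, χ a * correlation ψ f t a =
      (∑ x, χ x * ψ (f x)) * ∑ y, χ⁻¹ y * ψ (-(t * f y)) := by
  simp only [sum_mulChar_mul_sum_inv hχ, correlation, sub_eq_add_neg, AddChar.map_add_eq_mul]

namespace IsDiffEquidistributed

theorem isEquidistributed {L K : Type*} [MulZeroOneClass L] [Nontrivial L] [AddGroup K] {f : L → K}
    (hf : IsDiffEquidistributed f) : IsEquidistributed f := by
  simpa [Function.comp_def, hf.apply_zero] using (hf.diff 0 zero_ne_one).equiv_comp (Equiv.neg K)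

section Correlation

variable {L K O : Type*} [CommGroupWithZero L] [Fintype L] [Field K] [Finite K] [CommRing O]
  [IsDomain O] {f : L → K} {ψ : AddChar K O} {t : K}

theorem correlation_one_eq_ite [DecidableEq L] (hf : IsDiffEquidistributed f) (hψ : ψ ≠ 1) (a : L) :
    correlation ψ f 1 a = if a = 1 then (Fintype.card L : O) else 0 := by
  simp only [correlation, one_mul]
  split_ifs with ha
  · simp [ha]
  · exact (hf.diff a ha).sum_addChar_comp_eq_zero hψ

theorem correlation_apply_zero (hf : IsDiffEquidistributed f) (hψ : ψ ≠ 1) (ht : t ≠ 0) :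
    correlation ψ f t 0 = 0 := by
  have h := (hf.isEquidistributed.equiv_comp
    (Equiv.mulLeft₀ (-t) (neg_ne_zero.2 ht))).sum_addChar_comp_eq_zero hψ
  simpa [correlation, hf.apply_zero] using h

theorem sum_correlation (hf : IsDiffEquidistributed f) (hψ : ψ ≠ 1) (t : K) :
    ∑ a, correlation ψ f t a = Fintype.card L := by
  have hinner (y : L) (hy : y ≠ 0) : ∑ a, ψ (f (a * y) - t * f y) = 0 := by
    have h := (hf.isEquidistributed.comp_equiv
      (Equiv.mulRight₀ y hy : L ≃ L)).sum_addChar_comp_eq_zero hψ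
    simp only [Function.comp_apply, Equiv.mulRight₀_apply] at h
    simp only [sub_eq_add_neg, AddChar.map_add_eq_mul, ← Finset.sum_mul, h, zero_mul]
  simp only [correlation]
  rw [Finset.sum_comm, Fintype.sum_eq_single 0 hinner]
  simp [hf.apply_zero]

theorem card_dvd_sum_mulChar_mul_correlation (hf : IsDiffEquidistributed f) (hψ : ψ ≠ 1)
    (ht : t ≠ 0) {σ : O ≃+* O} (hσψ : ∀ b, σ (ψ b) = ψ (t * b)) {χ : MulChar L O}
    (hσχ : ∀ a, σ (χ⁻¹ a) = χ⁻¹ a)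
    (hσ : ∀ a : O, a ∣ Fintype.card L → Associated (σ a) a) :
    (Fintype.card L : O) ∣ ∑ a, χ a * correlation ψ f t a := by
  classical
  rcases eq_or_ne χ 1 with rfl | hχ
  · have hone (a : L) : (1 : MulChar L O) a * correlation ψ f t a = correlation ψ f t a := by
      rcases eq_or_ne a 0 with rfl | ha
      · rw [hf.correlation_apply_zero hψ ht, mul_zero]
      · rw [MulChar.one_apply ha.isUnit, one_mul]
    rw [Fintype.sum_congr _ _ hone, hf.sum_correlation hψ]
  · have hprod : (∑ x, χ x * ψ (f x)) * ∑ y, χ⁻¹ y * ψ (-(1 * f y)) = Fintype.card L := by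
      rw [← sum_mulChar_mul_correlation ψ f 1 hχ]
      simp [hf.correlation_one_eq_ite hψ]
    have hσsum : σ (∑ y, χ⁻¹ y * ψ (-(1 * f y))) = ∑ y, χ⁻¹ y * ψ (-(t * f y)) := by
      simp only [map_sum, map_mul, hσχ, hσψ, one_mul, mul_neg]
    rw [sum_mulChar_mul_correlation ψ f t hχ, ← hσsum]
    exact (hprod ▸ (hσ _ (Dvd.intro_left _ hprod)).mul_left _).dvd'

theorem card_dvd_correlation [HasEnoughRootsOfUnity O (Monoid.exponent Lˣ)]
    (hf : IsDiffEquidistributed f) (hψ : ψ ≠ 1) (ht : t ≠ 0) {σ : O ≃+* O}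
    (hσψ : ∀ b, σ (ψ b) = ψ (t * b)) (hσχ : ∀ (χ : MulChar L O) a, σ (χ a) = χ a)
    (hσ : ∀ a : O, a ∣ Fintype.card L → Associated (σ a) a) (a : L) :
    (Fintype.card L : O) ∣ correlation ψ f t a := by
  classical
  rcases eq_or_ne a 0 with rfl | ha
  · rw [hf.correlation_apply_zero hψ ht]
    exact dvd_zero _
  have hdvd := dvd_card_units_mul_of_forall_dvd_sum_mulChar (fun χ =>
    hf.card_dvd_sum_mulChar_mul_correlation hψ ht hσψ (hσχ χ⁻¹) hσ) (Units.mk0 a ha)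
  have hcard : (Fintype.card L : O) = Nat.card Lˣ + 1 := by
    rw [Nat.card_eq_fintype_card, Fintype.card_eq_card_units_add_one, Nat.cast_succ]
  have hcoprime : IsCoprime (Fintype.card L : O) (Nat.card Lˣ) := ⟨1, -1, by rw [hcard]; ring⟩
  exact hcoprime.dvd_of_dvd_mul_left hdvd

end Correlation

open NumberField in
theorem exists_forall_apply_mul_eq_of_card_dvd_correlation {L K E : Type*} [CommGroupWithZero L]
    [Fintype L] [Field K] [Finite K] [Field E] [NumberField E] {f : L → K}
    (hf : IsDiffEquidistributed f) {ψ : AddChar K (𝓞 E)} (hψ : Function.Injective ψ) {t : K}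
    (hdvd : ∀ a, (Fintype.card L : 𝓞 E) ∣ correlation ψ f t a) :
    ∃ a, ∀ x, f (a * x) = t * f x := by
  have hψ1 : ψ ≠ 1 := fun h => zero_ne_one (hψ (by simp [h]))
  have hsum : ∑ a, correlation ψ f t a ≠ 0 := by
    rw [hf.sum_correlation hψ1]
    exact Nat.cast_ne_zero.2 Fintype.card_ne_zero
  obtain ⟨a, -, ha⟩ := Finset.exists_ne_zero_of_sum_ne_zero hsum
  have hfin (x : K) : IsOfFinOrder (ψ x) := isOfFinOrder_iff_pow_eq_one.2
    ⟨Nat.card K, Nat.card_pos, addChar_apply_pow_card ψ x⟩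
  have hconst := (sum_eq_zero_or_forall_eq_of_card_dvd_sum (fun y => hfin _) (hdvd a)).resolve_left
    ha
  refine ⟨a, fun x => sub_eq_zero.1 (hψ ((hconst x 0).trans ?_))⟩
  simp [hf.apply_zero]

open NumberField in
theorem exists_forall_apply_mul_eq {L K : Type*} [CommGroupWithZero L] [Fintype L] [Field K]
    [Fintype K] {n : ℕ} (hK : (Fintype.card K).Prime)
    (hL : Fintype.card L = Fintype.card K ^ n) {f : L → K} (hf : IsDiffEquidistributed f) (t : K) :
    ∃ a, ∀ x, f (a * x) = t * f x := by
  classical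
  rcases eq_or_ne t 0 with rfl | ht
  · exact ⟨0, fun x => by rw [zero_mul, zero_mul, hf.apply_zero]⟩
  have hn : n ≠ 0 := fun h => (Fintype.one_lt_card (α := L)).ne' (by rw [hL, h, pow_zero])
  have hcoprime : (Fintype.card Lˣ).Coprime (Fintype.card K) := by
    have h : (Fintype.card Lˣ).Coprime (Fintype.card K ^ n) := by
      rw [← hL, Fintype.card_eq_card_units_add_one (α := L), Nat.coprime_self_add_right]
      exact Nat.coprime_one_right _
    exact (Nat.coprime_pow_right_iff (Nat.pos_of_ne_zero hn) _ _).1 h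
  let m := Fintype.card Lˣ * Fintype.card K
  have : NeZero m := ⟨mul_ne_zero Fintype.card_ne_zero hK.ne_zero⟩
  let E := CyclotomicField m ℚ
  have : IsCyclotomicExtension {m} ℚ E := CyclotomicField.isCyclotomicExtension m ℚ
  have hη := (IsCyclotomicExtension.zeta_spec m ℚ E).toInteger_isPrimitiveRoot
  have : HasEnoughRootsOfUnity (𝓞 E) m := ⟨⟨_, hη⟩, rootsOfUnity.isCyclic _ m⟩
  have : HasEnoughRootsOfUnity (𝓞 E) (Monoid.exponent Lˣ) :=
    HasEnoughRootsOfUnity.of_dvd _ (n := m) (Group.exponent_dvd_card.trans (dvd_mul_right _ _))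
  obtain ⟨ψ, hψ⟩ := exists_addChar_injective_s14 hK (hη.pow (NeZero.pos _) rfl)
  obtain ⟨σ, hσψ, hσχ, hσ⟩ := exists_ringEquiv_addChar_mulChar L hK hcoprime ψ ht
  have hψ1 : ψ ≠ 1 := fun h => zero_ne_one (hψ (by simp [h]))
  refine hf.exists_forall_apply_mul_eq_of_card_dvd_correlation hψ
    (hf.card_dvd_correlation hψ1 ht hσψ hσχ fun a ha => hσ a n ?_)
  rwa [hL, Nat.cast_pow] at ha

end IsDiffEquidistributed

end Multipliers

section TwoTuples

open Polynomial in
theorem mem_range_algebraMap_of_pow_card_eq_self {K L : Type*} [Field K] [Fintype K] [CommRing L]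
    [IsDomain L] [Algebra K L] {a : L} (ha : a ^ Fintype.card K = a) :
    a ∈ Set.range (algebraMap K L) := by
  have hsplits : (X ^ Fintype.card K - X : K[X]).Splits := by
    simpa using IsSplittingField.splits K (X ^ Fintype.card K - X : K[X])
  exact hsplits.mem_range_of_isRoot (i := algebraMap K L)
    (FiniteField.X_pow_card_sub_X_ne_zero K Fintype.one_lt_card) (by simp [ha])

namespace IsDiffEquidistributed

section Dilates

variable {L K : Type*} [GroupWithZero L]

theorem sub_dilates [AddGroup K] {f : L → K} (hf : IsDiffEquidistributed f) {a b : L}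
    (hab : a ≠ b) : IsEquidistributed fun x => f (a * x) - f (b * x) := by
  rcases eq_or_ne b 0 with rfl | hb
  · simpa [Function.comp_def, hf.apply_zero] using
      hf.isEquidistributed.comp_equiv (Equiv.mulLeft₀ a hab : L ≃ L)
  · have h := (hf.diff (a / b) (mt (div_eq_one_iff_eq hb).1 hab)).comp_equiv
      (Equiv.mulLeft₀ b hb : L ≃ L)
    simpa [Function.comp_def, ← mul_assoc, div_mul_cancel₀ a hb] using h

theorem eq_of_forall_apply_mul_eq [Finite L] [AddGroup K] [Nontrivial K] {f : L → K}
    (hf : IsDiffEquidistributed f) {a b : L} (h : ∀ x, f (a * x) = f (b * x)) : a = b := by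
  by_contra hab
  obtain ⟨k, hk⟩ := exists_ne (0 : K)
  obtain ⟨x, hx⟩ := (hf.sub_dilates hab).surjective k
  exact hk (hx.symm.trans (sub_eq_zero.2 (h x)))

theorem pow_card_eq_self [Finite L] [Field K] [Fintype K] {f : L → K}
    (hf : IsDiffEquidistributed f) {a : L} {t : K} (ha : ∀ x, f (a * x) = t * f x) :
    a ^ Fintype.card K = a := by
  have hpow (k : ℕ) (x : L) : f (a ^ k * x) = t ^ k * f x := by
    induction k with
    | zero => simp only [pow_zero, one_mul]
    | succ k ih => rw [pow_succ', pow_succ', mul_assoc, mul_assoc, ha, ih]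
  exact hf.eq_of_forall_apply_mul_eq fun x => by rw [hpow, ha, FiniteField.pow_card]

end Dilates

variable {K L : Type*} [Field K] [Field L] [Algebra K L] [Fintype K] [Finite L] {f : L → K}

theorem exists_forall_apply_algebraMap_mul_eq (hf : IsDiffEquidistributed f)
    (hK : (Fintype.card K).Prime) (t : K) : ∃ c, ∀ x, f (algebraMap K L c * x) = t * f x := by
  have := Fintype.ofFinite L
  obtain ⟨a, ha⟩ := hf.exists_forall_apply_mul_eq hK Module.card_eq_pow_finrank t
  obtain ⟨c, rfl⟩ := mem_range_algebraMap_of_pow_card_eq_self (K := K) (hf.pow_card_eq_self ha)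
  exact ⟨c, ha⟩

theorem exists_forall_apply_algebraMap_mul_eq_mul (hf : IsDiffEquidistributed f)
    (hK : (Fintype.card K).Prime) (c : K) :
    ∃ μ, ∀ x, f (algebraMap K L c * x) = μ * f x := by
  choose g hg using hf.exists_forall_apply_algebraMap_mul_eq hK
  have hg_inj : Function.Injective g := fun s t hst => by
    obtain ⟨x, hx⟩ := hf.isEquidistributed.surjective 1
    have h := (hg s x).symm.trans (hst ▸ hg t x)
    rwa [hx, mul_one, mul_one] at h
  obtain ⟨μ, rfl⟩ := Finite.surjective_of_injective hg_inj c
  exact ⟨μ, hg μ⟩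

theorem isEquidistributed_prodMk (hf : IsDiffEquidistributed f) (hK : (Fintype.card K).Prime)
    {a : L} (ha : a ∉ Set.range (algebraMap K L)) :
    IsEquidistributed fun x => (f x, f (a * x)) := by
  refine hf.isEquidistributed.prodMk fun s => ?_
  obtain ⟨c, hc⟩ := hf.exists_forall_apply_algebraMap_mul_eq hK s
  simpa only [hc] using hf.sub_dilates fun h => ha ⟨c, h.symm⟩

end IsDiffEquidistributed

end TwoTuples

section Punctured

theorem card_subtype_ne_and_add_ite {X : Type*} [Finite X] (a : X) (P : X → Prop)
    [Decidable (P a)] :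
    Nat.card {x // x ≠ a ∧ P x} + (if P a then 1 else 0) = Nat.card {x // P x} := by
  classical
  have := Fintype.ofFinite X
  have herase : Finset.univ.filter (fun x => x ≠ a ∧ P x) = (Finset.univ.filter P).erase a := by
    ext x
    simp only [Finset.mem_filter_univ, Finset.mem_erase]
  simp only [Nat.card_eq_fintype_card, Fintype.card_subtype, herase]
  split_ifs with ha
  · exact Finset.card_erase_add_one ((Finset.mem_filter_univ a).2 ha)
  · rw [Finset.erase_eq_of_notMem (mt (Finset.mem_filter_univ a).1 ha), add_zero]

theorem IsEquidistributed.card_fiber_eq_pow {X A : Type*} {q k n : ℕ} {h : X → A} (hq : 1 < q)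
    (hh : IsEquidistributed h) (hA : Nat.card A = q ^ k) (hX : Nat.card X = q ^ n) (b : A) :
    Nat.card {x // h x = b} = q ^ (n - k) := by
  have hmul : q ^ k * Nat.card {x // h x = b} = q ^ n := by rw [← hA, ← hX, hh b]
  have hkn : k ≤ n := (Nat.pow_dvd_pow_iff_le_right hq).1 (Dvd.intro _ hmul)
  refine Nat.eq_of_mul_eq_mul_left (pow_pos (zero_lt_one.trans hq) k) ?_
  rw [hmul, ← pow_add, Nat.add_sub_cancel' hkn]

section Extension

variable {K L : Type*} [Field K] [Fintype K] [Field L] [Fintype L] [DecidableEq L] {n : ℕ}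
  {f : L → K}

theorem IsBalanced.isEquidistributed (hL : Fintype.card L = Fintype.card K ^ n)
    (hf : IsBalanced (Fintype.card K) n f) : IsEquidistributed (Function.update f 0 0) := by
  classical
  intro b
  have hn : n ≠ 0 := fun h => (Fintype.one_lt_card (α := L)).ne' (by rw [hL, h, pow_zero])
  have hne : Nat.card {x : L // x ≠ 0 ∧ Function.update f 0 0 x = b} =
      Nat.card {x : L | x ≠ 0 ∧ f x = b} :=
    Nat.card_congr (Equiv.subtypeEquivRight fun x => and_congr_right fun hx => by
      rw [Function.update_of_ne hx])
  have hcard : Nat.card {x // Function.update f 0 0 x = b} = Fintype.card K ^ (n - 1) := by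
    rw [← card_subtype_ne_and_add_ite 0, hne, Function.update_self]
    rcases eq_or_ne b 0 with rfl | hb
    · rw [hf.1, if_pos rfl, Nat.sub_add_cancel (Nat.one_le_pow _ _ Fintype.card_pos)]
    · rw [hf.2 b hb, if_neg hb.symm, add_zero]
  rw [hcard, Nat.card_eq_fintype_card, Nat.card_eq_fintype_card, hL, mul_pow_sub_one hn]

theorem IsDiffBalanced.isDiffEquidistributed (hL : Fintype.card L = Fintype.card K ^ n)
    (hdb : IsDiffBalanced (Fintype.card K) n f) (hbal : IsBalanced (Fintype.card K) n f) :
    IsDiffEquidistributed (Function.update f 0 0) where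
  apply_zero := Function.update_self ..
  diff a ha := by
    rcases eq_or_ne a 0 with rfl | ha0
    · simpa [Function.comp_def] using (hbal.isEquidistributed hL).equiv_comp (Equiv.neg K)
    · convert (hdb a ha0 ha).isEquidistributed hL using 2 with x
      rcases eq_or_ne x 0 with rfl | hx <;> simp [*]

theorem IsDiffEquidistributed.ntt_add_ite [Algebra K L] [DecidableEq K]
    (hf : IsDiffEquidistributed (Function.update f 0 0)) (hK : (Fintype.card K).Prime)
    (hL : Fintype.card L = Fintype.card K ^ n) {a : L} (ha : a ∉ Set.range (algebraMap K L))
    (b₁ b₂ : K) :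
    Ntt f a b₁ b₂ + (if b₁ = 0 ∧ b₂ = 0 then 1 else 0) = Fintype.card K ^ (n - 2) := by
  have ha0 : a ≠ 0 := fun h => ha ⟨0, (map_zero _).trans h.symm⟩
  let f₀ := Function.update f 0 0
  have hne : Ntt f a b₁ b₂ = Nat.card {x : L // x ≠ 0 ∧ f₀ x = b₁ ∧ f₀ (a * x) = b₂} :=
    Nat.card_congr (Equiv.subtypeEquivRight fun x => and_congr_right fun hx => by
      simp only [f₀, Function.update_of_ne hx, Function.update_of_ne (mul_ne_zero ha0 hx)])
  have hzero : (b₁ = 0 ∧ b₂ = 0) ↔ (f₀ 0 = b₁ ∧ f₀ (a * 0) = b₂) := by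
    simp only [f₀, mul_zero, Function.update_self, eq_comm]
  have hpair := (hf.isEquidistributed_prodMk hK ha).card_fiber_eq_pow (k := 2) hK.one_lt
    (by rw [Nat.card_prod, Nat.card_eq_fintype_card, sq]) (Nat.card_eq_fintype_card.trans hL)
    (b₁, b₂)
  simp only [hne, hzero, card_subtype_ne_and_add_ite 0 fun x => f₀ x = b₁ ∧ f₀ (a * x) = b₂]
  simpa only [Prod.mk.injEq] using hpair

end Extension

section Scalars

variable {K L : Type*} [Field K] [Field L] {f : L → K} {a : L} {μ : K}

theorem ntt_mul_of_forall_apply_mul_eq (hμ : ∀ x, x ≠ 0 → f (a * x) = μ * f x) (b : K) :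
    Ntt f a b (μ * b) = Nat.card {x : L | x ≠ 0 ∧ f x = b} :=
  Nat.card_congr (Equiv.subtypeEquivRight fun x => and_congr_right fun hx =>
    and_iff_left_of_imp fun hfx => by rw [hμ x hx, hfx])

theorem ntt_eq_zero_of_forall_apply_mul_eq (hμ : ∀ x, x ≠ 0 → f (a * x) = μ * f x) {b₁ b₂ : K}
    (hb : b₂ ≠ μ * b₁) : Ntt f a b₁ b₂ = 0 := by
  have : IsEmpty {x : L | x ≠ 0 ∧ f x = b₁ ∧ f (a * x) = b₂} :=
    ⟨fun ⟨x, hx, h₁, h₂⟩ => hb (by rw [← h₂, hμ x hx, h₁])⟩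
  exact Nat.card_of_isEmpty

end Scalars

end Punctured

theorem stmt_14_general {K L : Type*} [Field K] [Field L] [Algebra K L] [Fintype K] [Fintype L]
    (p n : ℕ) (hp : p.Prime) (hK : Fintype.card K = p) (hL : Fintype.card L = p ^ n)
    (f : L → K) (hdb : IsDiffBalanced p n f) (hbal : IsBalanced p n f) :
    IsTwoTupleBalanced p n f := by
  classical
  subst hK
  have hf := hdb.isDiffEquidistributed hL hbal
  refine ⟨fun a _ ha => ?_, fun c hc => ?_⟩
  · have hNtt := hf.ntt_add_ite hp hL (a := a) fun ⟨c, h⟩ => ha c h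
    exact ⟨Nat.eq_sub_of_add_eq (by simpa using hNtt 0 0), fun b₁ b₂ hb => by
      simpa [hb] using hNtt b₁ b₂⟩
  · obtain ⟨μ, hμ₀⟩ := hf.exists_forall_apply_algebraMap_mul_eq_mul hp c
    have hμ (x : L) (hx : x ≠ 0) : f (algebraMap K L c * x) = μ * f x := by
      simpa [hx, hc] using hμ₀ x
    have hN := ntt_mul_of_forall_apply_mul_eq hμ
    exact ⟨μ, hμ, by simpa using (hN 0).trans hbal.1, fun b hb => (hN b).trans (hbal.2 b hb),
      fun _ _ => ntt_eq_zero_of_forall_apply_mul_eq hμ⟩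

/-- Every balanced difference balanced function `f : L∖{0} → 𝔽_p` is
two-tuple balanced. -/
theorem stmt_14 {K L : Type*} [Field K] [Field L] [Algebra K L] [Fintype K] [Fintype L]
    (p n : ℕ) (hp : p.Prime) (hodd : Odd p) (hn : 2 ≤ n)
    (hK : Fintype.card K = p) (hL : Fintype.card L = p ^ n)
    (f : L → K) (hdb : IsDiffBalanced p n f) (hbal : IsBalanced p n f) :
    IsTwoTupleBalanced p n f :=
  stmt_14_general p n hp hK hL f hdb hbal
end

section
/- Let p be an odd prime, q = p^m, and n ≥ 2. Suppose f : L∖{0} → K is surjective onto K, difference balanced, and d-homogeneous. Fix b ∈ K∖{0}, let D_b := {x ∈ L∖{0} : f(x) = b}, and let ρ : L^× → L^×/K^× be the quotient homomorphism, where K^× is the image of K∖{0} in L^×. Then ρ is injective on D_b and ρ(D_b) is a ((q^n−1)/(q−1), q^{n−1}, q^{n−2}(q−1)) difference set in the cyclic group L^×/K^× (a difference set with Singer parameters). -/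
/-- `D ⊆ G` is a `(v, k, λ)` difference set: `|G| = v`, `|D| = k`, and every `g ≠ 1`
has exactly `λ` representations `g = d₁d₂⁻¹` with `d₁, d₂ ∈ D`. -/
def IsDiffSet {G : Type*} [Group G] (D : Set G) (v k lam : ℕ) : Prop :=
  Nat.card G = v ∧ Nat.card D = k ∧
    ∀ g : G, g ≠ 1 →
      Nat.card {pq : G × G // pq.1 ∈ D ∧ pq.2 ∈ D ∧ pq.1 * pq.2⁻¹ = g} = lam

/-!
Precomposing the scalar embedding with the inverse of the automorphism `c ↦ c ^ d` of `Kˣ` makes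
`f` homogeneous of degree one along some `ι : Kˣ →* Lˣ` with the same range `H`. Each coset of `H`
on which `f` does not vanish then meets `D_b` exactly once, so `ρ(D_b)` is the image of the support
`S` of `f`, and the representations of `ρ(a)` correspond to the cosets contained in `S ∩ a⁻¹S`.

For `c ≠ 1` in `Kˣ` the equation `f (c x) = f x` holds exactly at the zeros of `f`, so by difference
balance the zero set is as large as `{x | f (a x) = f x}` for every `a ≠ 1`. Its translate
`{x | f (a x) = 0}` has the same size, and removing the common zeros of `f x` and `f (a x)` from
these two sets shows that `f (a x) = f x ≠ 0` has as many solutions as `f (a x) = 0 ≠ f x`, say `t`.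
For `a ∉ H` this applies to all elements of `H a`, with the same `t`, so on `S ∩ a⁻¹S` the ratio of
`f x` to `f (a x)` takes each of its `q - 1` values `t` times. Hence `S ∩ a⁻¹S` consists of `t`
cosets, and `|S| = (q - 1) t + t = q t` gives `λ = t = |S| / q`.
-/

section Counting

variable {G M : Type*} [Group G]

lemma card_mul_inv_eq_ncard_inter_preimage (D : Set G) (g : G) :
    Nat.card {pq : G × G // pq.1 ∈ D ∧ pq.2 ∈ D ∧ pq.1 * pq.2⁻¹ = g} =
      (D ∩ (g * ·) ⁻¹' D).ncard :=
  Nat.card_congr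
    { toFun := fun r => ⟨r.1.2, r.2.2.1, by simpa [← r.2.2.2] using r.2.1⟩
      invFun := fun y => ⟨(g * y, y), y.2.2, y.2.1, mul_inv_cancel_right g y⟩
      left_inv := fun r => Subtype.ext <| Prod.ext (by simp [← r.2.2.2]) rfl
      right_inv := fun _ => rfl }

lemma ncard_preimage_mk_range {H : Type*} [Group H] {ι : H →* G} (hι : Function.Injective ι)
    (t : Set (G ⧸ ι.range)) :
    ((QuotientGroup.mk : G → G ⧸ ι.range) ⁻¹' t).ncard = Nat.card H * t.ncard := by
  rw [← Nat.card_coe_set_eq, Nat.card_congr (QuotientGroup.preimageMkEquivSubgroupProdSet _ t),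
    Nat.card_prod, Nat.card_coe_set_eq, Nat.card_congr (MonoidHom.ofInjective hι).toEquiv]

lemma ncard_setOf_mul_left (P : G → Prop) (a : G) : {u | P (a * u)}.ncard = {u | P u}.ncard :=
  Nat.card_congr ((Equiv.mulLeft a).subtypeEquiv fun _ => Iff.rfl)

lemma ncard_ne_zero_and_mul_left_eq [Finite G] [Zero M] {F : G → M} {a : G}
    (h : {u | F (a * u) = F u}.ncard = {u | F u = 0}.ncard) :
    {u | F u ≠ 0 ∧ F (a * u) = F u}.ncard = {u | F u ≠ 0 ∧ F (a * u) = 0}.ncard := by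
  have fixed_split := Set.ncard_inter_add_ncard_sdiff_eq_ncard {u | F (a * u) = F u} {u | F u = 0}
  have zero_split := Set.ncard_inter_add_ncard_sdiff_eq_ncard {u | F (a * u) = 0} {u | F u = 0}
  have common_zeros : {u | F (a * u) = F u} ∩ {u | F u = 0} =
      {u | F (a * u) = 0} ∩ {u | F u = 0} := by
    ext u
    exact and_congr_left fun hu : F u = 0 => by simp only [Set.mem_ofPred_eq, hu]
  rw [common_zeros, h, ← ncard_setOf_mul_left (F · = 0) a, ← zero_split] at fixed_split
  simpa only [Set.sdiff_eq, Set.inter_comm, Set.compl_ofPred, ← Set.ofPred_and, and_comm] using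
    Nat.add_left_cancel fixed_split

lemma ncard_units_eq_card_ne_zero_and {L : Type*} [GroupWithZero L] (P : L → Prop) :
    {u : Lˣ | P u}.ncard = Nat.card {x : L | x ≠ 0 ∧ P x} :=
  Nat.card_congr <| (unitsEquivNeZero.subtypeEquiv fun _ => Iff.rfl).trans
    (Equiv.subtypeSubtypeEquivSubtypeInter (· ≠ 0) P)

end Counting

/-- `F` is homogeneous of degree one along `ι`, for scalars `c` acting on `G` through multiplication
by `ι c`. A homogeneous function of degree `d` prime to the order of `Kˣ` is of this form, for the
composition of the scalar embedding with the inverse of `c ↦ c ^ d`. -/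
def IsHomogeneousAlong {K G : Type*} [GroupWithZero K] [Group G] (ι : Kˣ →* G) (F : G → K) : Prop :=
  ∀ (c : Kˣ) (u : G), F (ι c * u) = c * F u

namespace IsHomogeneousAlong

variable {K G : Type*} [GroupWithZero K]

lemma setOf_map_mul_eq [Group G] {ι : Kˣ →* G} {F : G → K} (hF : IsHomogeneousAlong ι F) {c : Kˣ}
    (hc : c ≠ 1) : {u | F (ι c * u) = F u} = {u | F u = 0} := by
  ext u
  simp only [Set.mem_ofPred_eq, hF c u, mul_left_eq_self₀, Units.val_eq_one, hc, false_or]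

lemma ncard_ne_zero_and_mul_left_ne_zero [Group G] {ι : Kˣ →* G} {F : G → K}
    (hF : IsHomogeneousAlong ι F) [Finite K] [Finite G] {a : G} {t : ℕ}
    (ht : ∀ c : Kˣ, {u | F u ≠ 0 ∧ F (ι c * a * u) = F u}.ncard = t) :
    {u | F u ≠ 0 ∧ F (a * u) ≠ 0}.ncard = Nat.card Kˣ * t := by
  have := Fintype.ofFinite Kˣ
  let ratio (u : {u | F u ≠ 0 ∧ F (a * u) ≠ 0}) : Kˣ :=
    Units.mk0 (F u) u.2.1 / Units.mk0 (F (a * u)) u.2.2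
  have ratio_fiber (c : Kˣ) : Nat.card {u // ratio u = c} = t := by
    rw [← ht c, ← Nat.card_coe_set_eq]
    refine Nat.card_congr ((Equiv.subtypeSubtypeEquivSubtypeExists _ _).trans
      (Equiv.subtypeEquivRight fun u => ?_))
    have ratio_eq_iff (hu : F u ≠ 0 ∧ F (a * u) ≠ 0) :
        ratio ⟨u, hu⟩ = c ↔ F (ι c * a * u) = F u := by
      rw [div_eq_iff_eq_mul, Units.ext_iff, Units.val_mul, mul_assoc, hF, eq_comm]
      rfl
    refine ⟨fun ⟨hu, hc⟩ => ⟨hu.1, (ratio_eq_iff hu).1 hc⟩, fun ⟨hu, hc⟩ => ?_⟩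
    have hau : F (a * u) ≠ 0 := fun h => hu (by rw [← hc, mul_assoc, hF, h, mul_zero])
    exact ⟨⟨hu, hau⟩, (ratio_eq_iff ⟨hu, hau⟩).2 hc⟩
  rw [← Nat.card_coe_set_eq, ← Nat.card_congr (Equiv.sigmaFiberEquiv ratio), Nat.card_sigma]
  simp only [ratio_fiber, Finset.sum_const, Finset.card_univ, smul_eq_mul, Nat.card_eq_fintype_card]

variable [CommGroup G] {ι : Kˣ →* G} {F : G → K} {b : K}

lemma injOn_mk (hF : IsHomogeneousAlong ι F) (hb : b ≠ 0) :
    Set.InjOn (QuotientGroup.mk' ι.range) {u | F u = b} := by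
  intro u hu v hv huv
  obtain ⟨_, ⟨c, rfl⟩, rfl⟩ := (QuotientGroup.mk'_eq_mk' _).1 huv
  have hc : (c : K) * b = b := by
    rw [← show F u = b from hu, ← hF, mul_comm]
    exact hv.trans (Eq.symm hu)
  rw [Units.val_eq_one.1 ((mul_eq_right₀ hb).1 hc), map_one, mul_one]

lemma preimage_mk_image_eq (hF : IsHomogeneousAlong ι F) (hb : b ≠ 0) :
    QuotientGroup.mk ⁻¹' (QuotientGroup.mk' ι.range '' {u | F u = b}) = {u | F u ≠ 0} := by
  ext u
  constructor
  · rintro ⟨v, rfl, huv⟩ hu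
    obtain ⟨_, ⟨c, rfl⟩, rfl⟩ := (QuotientGroup.mk'_eq_mk' _).1 huv
    rw [mul_comm, hF, mul_eq_zero_iff_left c.ne_zero] at hu
    exact hb hu
  · intro hu
    obtain ⟨c, hc⟩ : ∃ c : Kˣ, (c : K) * F u = b :=
      ⟨Units.mk0 b hb / Units.mk0 (F u) hu, by simp [div_mul_cancel₀ b hu]⟩
    refine ⟨ι c * u, (hF c u).trans hc, ?_⟩
    exact (QuotientGroup.mk'_eq_mk' _).2 ⟨(ι c)⁻¹, inv_mem ⟨c, rfl⟩, mul_inv_cancel_comm _ _⟩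

variable [Finite K] [Finite G]

lemma card_mul_ncard_inter_preimage (hF : IsHomogeneousAlong ι F) (hι : Function.Injective ι)
    {a : G} (ha : ∀ c : Kˣ, {u | F (ι c * a * u) = F u}.ncard = {u | F u = 0}.ncard)
    {D : Set (G ⧸ ι.range)} (hD : QuotientGroup.mk ⁻¹' D = {u | F u ≠ 0}) :
    Nat.card K * (D ∩ (QuotientGroup.mk' ι.range a * ·) ⁻¹' D).ncard = {u | F u ≠ 0}.ncard := by
  set t := {u | F u ≠ 0 ∧ F (a * u) = 0}.ncard with ht
  have ratio_fiber (c : Kˣ) : {u | F u ≠ 0 ∧ F (ι c * a * u) = F u}.ncard = t := by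
    rw [ncard_ne_zero_and_mul_left_eq (ha c)]
    simp only [mul_assoc, hF c, mul_eq_zero_iff_left c.ne_zero, ht]
  have both_ne_zero : {u | F u ≠ 0 ∧ F (a * u) ≠ 0}.ncard = Nat.card Kˣ * t :=
    hF.ncard_ne_zero_and_mul_left_ne_zero ratio_fiber
  have preimage_inter : QuotientGroup.mk ⁻¹' (D ∩ (QuotientGroup.mk' ι.range a * ·) ⁻¹' D) =
      {u | F u ≠ 0 ∧ F (a * u) ≠ 0} := by
    ext u
    exact and_congr (Set.ext_iff.1 hD u) (Set.ext_iff.1 hD (a * u))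
  have inter_eq : (D ∩ (QuotientGroup.mk' ι.range a * ·) ⁻¹' D).ncard = t := by
    rw [← preimage_inter, ncard_preimage_mk_range hι] at both_ne_zero
    exact Nat.eq_of_mul_eq_mul_left Nat.card_pos both_ne_zero
  rw [inter_eq, Nat.card_eq_card_units_add_one, add_one_mul, ← both_ne_zero, add_comm]
  exact Set.ncard_inter_add_ncard_sdiff_eq_ncard {u | F u ≠ 0} {u | F (a * u) = 0}

theorem isDiffSet_image_mk [Nontrivial Kˣ] (hF : IsHomogeneousAlong ι F)
    (hι : Function.Injective ι) (hb : b ≠ 0) {z v k lam : ℕ}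
    (hz : ∀ a : G, a ≠ 1 → {u | F (a * u) = F u}.ncard = z)
    (hv : Nat.card G = Nat.card Kˣ * v) (hk : Nat.card G = z + Nat.card Kˣ * k)
    (hlam : Nat.card G = z + Nat.card K * lam) :
    IsDiffSet (QuotientGroup.mk' ι.range '' {u | F u = b}) v k lam := by
  have hzero : {u | F u = 0}.ncard = z := by
    obtain ⟨c, hc⟩ := exists_ne (1 : Kˣ)
    rw [← hF.setOf_map_mul_eq hc, hz _ ((map_ne_one_iff ι hι).2 hc)]
  have hsupp : z + {u | F u ≠ 0}.ncard = Nat.card G := by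
    rw [← hzero]
    exact Set.ncard_add_ncard_compl {u | F u = 0}
  have hD := hF.preimage_mk_image_eq hb
  refine ⟨Nat.eq_of_mul_eq_mul_left (Nat.card_pos (α := Kˣ)) ?_,
    Nat.eq_of_mul_eq_mul_left (Nat.card_pos (α := Kˣ)) ?_, fun g hg => ?_⟩
  · rw [← hv, ← Set.ncard_univ (G ⧸ ι.range), ← ncard_preimage_mk_range hι, Set.preimage_univ,
      Set.ncard_univ]
  · rw [Nat.card_coe_set_eq, ← ncard_preimage_mk_range hι, hD]
    lia
  · obtain ⟨a, rfl⟩ := QuotientGroup.mk'_surjective _ g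
    have ha (c : Kˣ) : ι c * a ≠ 1 := fun h =>
      hg <| (QuotientGroup.eq_one_iff a).2 ⟨c⁻¹, by rw [map_inv, inv_eq_of_mul_eq_one_right h]⟩
    have hinter := hF.card_mul_ncard_inter_preimage hι
      (fun c => (hz _ (ha c)).trans hzero.symm) hD
    rw [card_mul_inv_eq_ncard_inter_preimage]
    exact Nat.eq_of_mul_eq_mul_left (Nat.card_pos (α := K)) (by lia)

end IsHomogeneousAlong

lemma IsDHomogeneous.exists_isHomogeneousAlong {K L : Type*} [Field K] [Field L] [Algebra K L]
    [Finite K] {q d : ℕ} {f : L → K} (hK : Nat.card K = q) (hd : IsDHomogeneous q d f) :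
    ∃ ι : Kˣ →* Lˣ, Function.Injective ι ∧
      ι.range = (Units.map (algebraMap K L).toMonoidHom).range ∧
      IsHomogeneousAlong ι (fun u => f (u : L)) := by
  have hcop : (Nat.card Kˣ).Coprime d := by simpa only [Nat.card_units, hK] using hd.1.symm
  let e : Kˣ ≃* Kˣ := MulEquiv.ofBijective (powMonoidHom d) hcop.pow_left_bijective
  have root_pow (c : Kˣ) : (e.symm c : K) ^ d = c :=
    congrArg Units.val (e.apply_symm_apply c)
  refine ⟨(Units.map (algebraMap K L).toMonoidHom).comp e.symm.toMonoidHom,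
    (Units.map_injective (algebraMap K L).injective).comp e.symm.injective, ?_, fun c u => ?_⟩
  · rw [MonoidHom.range_comp, MonoidHom.range_eq_top.2 e.symm.surjective, ← MonoidHom.range_eq_map]
  · rw [← root_pow c]
    exact hd.2 _ (Units.ne_zero _) u u.ne_zero

theorem stmt_16_general {K L : Type*} [Field K] [Field L] [Algebra K L] {q n d : ℕ}
    (hq : 2 < q) (hn : 2 ≤ n) (hK : Nat.card K = q) (hL : Nat.card L = q ^ n) {f : L → K}
    (hf : ∀ a : L, a ≠ 0 → a ≠ 1 →
      Nat.card {x : L | x ≠ 0 ∧ f (a * x) = f x} = q ^ (n - 1) - 1)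
    (hd : IsDHomogeneous q d f) {b : K} (hb : b ≠ 0) :
    Set.InjOn (QuotientGroup.mk' (Units.map (algebraMap K L).toMonoidHom).range)
        {u : Lˣ | f (u : L) = b} ∧
      IsDiffSet
        ((QuotientGroup.mk' (Units.map (algebraMap K L).toMonoidHom).range) ''
          {u : Lˣ | f (u : L) = b})
        ((q ^ n - 1) / (q - 1)) (q ^ (n - 1)) (q ^ (n - 2) * (q - 1)) := by
  have : Finite K := Nat.finite_of_card_ne_zero (by lia)
  have : Finite L := Nat.finite_of_card_ne_zero (by rw [hL]; positivity)
  have cardK : Nat.card Kˣ = q - 1 := by rw [Nat.card_units, hK]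
  have cardL : Nat.card Lˣ = q ^ n - 1 := by rw [Nat.card_units, hL]
  have : Nontrivial Kˣ := Finite.one_lt_card_iff_nontrivial.1 (by lia)
  obtain ⟨ι, hι, hrange, hF⟩ := hd.exists_isHomogeneousAlong hK
  rw [← hrange]
  have pow_n : q ^ n = q * q ^ (n - 1) := (mul_pow_sub_one (by lia) q).symm
  have pow_pred_pos : 0 < q ^ (n - 1) := by positivity
  have pow_pred_le : q ^ (n - 1) ≤ q ^ n := Nat.pow_le_pow_right (by lia) (by lia)
  have pow_pred : q ^ (n - 1) = q * q ^ (n - 2) := (mul_pow_sub_one (by lia) q).symm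
  refine ⟨hF.injOn_mk hb,
    hF.isDiffSet_image_mk hι hb (z := q ^ (n - 1) - 1) (fun a ha => ?_) ?_ ?_ ?_⟩
  · rw [← hf a a.ne_zero (Units.val_eq_one.not.2 ha), ← ncard_units_eq_card_ne_zero_and]
    rfl
  · rw [cardK, cardL, Nat.mul_div_cancel' (by simpa using Nat.sub_dvd_pow_sub_pow q 1 n)]
  · rw [cardK, cardL, tsub_one_mul, ← pow_n]
    lia
  · rw [hK, cardL, mul_comm _ (q - 1), mul_left_comm, ← pow_pred, tsub_one_mul, ← pow_n]
    lia

/-- If `f : L∖{0} → K` is surjective, difference balanced and `d`-homogeneous, then for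
`b ∈ K∖{0}` the projection of `D_b` to `L^×/K^×` is injective on `D_b` and yields a
difference set with Singer parameters `((qⁿ−1)/(q−1), q^{n−1}, q^{n−2}(q−1))`. -/
theorem stmt_16 {K L : Type*} [Field K] [Field L] [Algebra K L] [Fintype K] [Fintype L]
    (p m n q : ℕ) (hp : p.Prime) (hodd : Odd p) (hm : 1 ≤ m) (hn : 2 ≤ n)
    (hq : q = p ^ m) (hK : Fintype.card K = q) (hL : Fintype.card L = q ^ n)
    (f : L → K) (hsurj : ∀ b : K, ∃ x : L, x ≠ 0 ∧ f x = b)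
    (hdb : IsDiffBalanced q n f) (d : ℕ) (hd : IsDHomogeneous q d f)
    (b : K) (hb : b ≠ 0) :
    Set.InjOn (QuotientGroup.mk' (Units.map (algebraMap K L).toMonoidHom).range)
        {u : Lˣ | f (u : L) = b} ∧
      IsDiffSet
        ((QuotientGroup.mk' (Units.map (algebraMap K L).toMonoidHom).range) ''
          {u : Lˣ | f (u : L) = b})
        ((q ^ n - 1) / (q - 1)) (q ^ (n - 1)) (q ^ (n - 2) * (q - 1)) := by
  have hp2 : p ≠ 2 := by rintro rfl; exact absurd hodd (by decide)
  have hq2 : 2 < q := hq ▸ (hp.two_le.lt_of_ne hp2.symm).trans_le (Nat.le_self_pow (by lia) p)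
  refine stmt_16_general hq2 hn (Nat.card_eq_fintype_card.trans hK)
    (Nat.card_eq_fintype_card.trans hL) (fun a ha ha1 => ?_) hd hb
  simpa only [sub_eq_zero] using (hdb a ha ha1).1
end

section
/- Let p be an odd prime, q = p^m, and n ≥ 2. Suppose f : L∖{0} → K is surjective onto K, difference balanced, and d-homogeneous. Then D₀ := {x ∈ L∖{0} : f(x) = 0}, viewed as a subset of L^×, is a divisible difference set with parameters ((q^n−1)/(q−1), q−1, q^{n−1}−1, q^{n−1}−1, q^{n−2}−1) relative to the subgroup K^×: |D₀| = q^{n−1}−1, every g ∈ K^× with g ≠ 1 has exactly q^{n−1}−1 representations g = d₁d₂⁻¹ with d₁, d₂ ∈ D₀, and every g ∈ L^×∖K^× has exactly q^{n−2}−1 such representations. -/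
/-- `D ⊆ G` is an `(m, n, k, λ₁, λ₂)` divisible difference set relative to `N`:
`|G| = mn`, `|N| = n`, `|D| = k`, every `g ∈ N∖{1}` has exactly `λ₁` representations
`g = d₁d₂⁻¹` with `d₁, d₂ ∈ D`, and every `g ∉ N` has exactly `λ₂`. -/
def IsDivDiffSet {G : Type*} [Group G] (D : Set G) (N : Subgroup G)
    (m n k l₁ l₂ : ℕ) : Prop :=
  Nat.card G = m * n ∧ Nat.card N = n ∧ Nat.card D = k ∧
    (∀ g : G, g ∈ N → g ≠ 1 →
      Nat.card {pq : G × G // pq.1 ∈ D ∧ pq.2 ∈ D ∧ pq.1 * pq.2⁻¹ = g} = l₁) ∧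
    (∀ g : G, g ∉ N →
      Nat.card {pq : G × G // pq.1 ∈ D ∧ pq.2 ∈ D ∧ pq.1 * pq.2⁻¹ = g} = l₂)

/-!
Put `z = q ^ (n - 1) - 1`. If `c : K` satisfies `c ^ d ≠ 1`, then `f (c * x) = f x` forces
`f x = 0`, so `f` has `z` zeros, and these are permuted by the units of `K`. For a unit `a` of `L`
outside `K`, each of the `q + 1` lines of `K²` through the origin contains the point
`(f (a * x), f x)` for exactly `z` units `x`: on the two axes these are the zeros of `f` and their
translates by `a⁻¹`, and on `u = t * v` with `t ≠ 0` one writes `t⁻¹ = c ^ d` to turn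
`f (a * x) = t * f x` into `f (c * a * x) = f x`. The origin lies on all `q + 1` lines and every
other point on exactly one, which determines the number of common zeros of `f (a * x)` and `f x`.
-/

section LineCounting

open Finset

variable {K : Type*} [GroupWithZero K] [Fintype K] [DecidableEq K]

theorem card_slopes_add_ite (u v : K) :
    #{t | u = t * v} + (if v = 0 then 1 else 0) =
      1 + Fintype.card K * (if u = 0 ∧ v = 0 then 1 else 0) := by
  by_cases hv : v = 0
  · by_cases hu : u = 0 <;> simp [hu, hv, add_comm]
  · have hslope : ({t | u = t * v} : Finset K) = {u / v} := by
      ext t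
      simp [eq_div_iff hv, eq_comm]
    simp [hslope, hv]

theorem sum_card_eq_mul_add_card_eq_zero {X : Type*} [Fintype X] (u v : X → K) :
    ∑ t, #{x | u x = t * v x} + #{x | v x = 0} =
      Fintype.card X + Fintype.card K * #{x | u x = 0 ∧ v x = 0} := by
  have hswap : ∑ t, #{x | u x = t * v x} = ∑ x, #{t | u x = t * v x} := by
    simp only [card_filter]
    exact sum_comm
  rw [hswap, card_filter (fun x => v x = 0), ← sum_add_distrib,
    sum_congr rfl fun x _ => card_slopes_add_ite (u x) (v x), sum_add_distrib, ← mul_sum,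
    ← card_filter]
  simp

end LineCounting

theorem card_mul_inv_eq {G : Type*} [Group G] (D : Set G) (g : G) :
    Nat.card {pq : G × G // pq.1 ∈ D ∧ pq.2 ∈ D ∧ pq.1 * pq.2⁻¹ = g} =
      Nat.card {x : G // g * x ∈ D ∧ x ∈ D} :=
  Nat.card_congr
    { toFun := fun y => ⟨y.1.2, by simpa [← y.2.2.2] using y.2.1, y.2.2.1⟩
      invFun := fun x => ⟨(g * x.1, x.1), x.2.1, x.2.2, mul_inv_cancel_right _ _⟩
      left_inv := by
        rintro ⟨⟨a, b⟩, ha, hb, rfl⟩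
        simp
      right_inv := fun _ => rfl }

/-- `f` is semi-invariant with multiplier `χ` under left translation by `H`, which acts on `G`
through `ι`. With `χ c = c ^ d` this is `d`-homogeneity. -/
def IsSemiInvariant {G H K : Type*} [Group G] [Group H] [GroupWithZero K] (ι : H →* G)
    (χ : H →* Kˣ) (f : G → K) : Prop :=
  ∀ h x, f (ι h * x) = χ h * f x

namespace IsSemiInvariant

variable {G H K : Type*} [Group G] [Group H] [GroupWithZero K] {ι : H →* G} {χ : H →* Kˣ}
  {f : G → K} {z : ℕ}

theorem apply_mul_eq_zero_iff (hf : IsSemiInvariant ι χ f) (h : H) (x : G) :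
    f (ι h * x) = 0 ↔ f x = 0 := by
  rw [hf, Units.mul_right_eq_zero]

theorem apply_mul_eq_self_iff (hf : IsSemiInvariant ι χ f) {h : H} (hh : χ h ≠ 1) (x : G) :
    f (ι h * x) = f x ↔ f x = 0 := by
  rw [hf, mul_left_eq_self₀, Units.val_eq_one, or_iff_right hh]

theorem card_zeros (hf : IsSemiInvariant ι χ f) (hι : Function.Injective ι) {h : H} (hh : χ h ≠ 1)
    (hz : ∀ a ≠ 1, Nat.card {x // f (a * x) = f x} = z) : Nat.card {x // f x = 0} = z := by
  have hιh : ι h ≠ 1 := fun h1 => hh (by rw [(map_eq_one_iff ι hι).1 h1, map_one])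
  rw [← hz (ι h) hιh]
  exact Nat.card_congr (Equiv.subtypeEquivRight fun x => (hf.apply_mul_eq_self_iff hh x).symm)

theorem card_apply_mul_eq_units_mul (hf : IsSemiInvariant ι χ f) (hχ : Function.Surjective χ)
    (hz : ∀ a ≠ 1, Nat.card {x // f (a * x) = f x} = z) {g : G} (hg : g ∉ ι.range) (t : Kˣ) :
    Nat.card {x // f (g * x) = t * f x} = z := by
  obtain ⟨h, hh⟩ := hχ t⁻¹
  have hne : ι h * g ≠ 1 := fun h1 => hg ⟨h⁻¹, by rw [map_inv, inv_eq_of_mul_eq_one_right h1]⟩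
  rw [← hz (ι h * g) hne]
  refine Nat.card_congr (Equiv.subtypeEquivRight fun x => ?_)
  rw [mul_assoc, hf, hh, Units.inv_mul_eq_iff_eq_mul]

theorem card_common_zeros [Finite G] [Finite K] (hf : IsSemiInvariant ι χ f)
    (hχ : Function.Surjective χ) (hz : ∀ a ≠ 1, Nat.card {x // f (a * x) = f x} = z)
    (hzeros : Nat.card {x // f x = 0} = z) {g : G} (hg : g ∉ ι.range) :
    Nat.card K * Nat.card {x // f (g * x) = 0 ∧ f x = 0} + Nat.card G = (Nat.card K + 1) * z := by
  classical
  have := Fintype.ofFinite G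
  have := Fintype.ofFinite K
  have hline (t : K) : Nat.card {x // f (g * x) = t * f x} = z := by
    obtain rfl | ht := eq_or_ne t 0
    · simp only [zero_mul]
      rw [← hzeros]
      exact Nat.card_congr ((Equiv.mulLeft g).subtypeEquiv fun _ => Iff.rfl)
    · exact hf.card_apply_mul_eq_units_mul hχ hz hg (Units.mk0 t ht)
  have hcount := sum_card_eq_mul_add_card_eq_zero (fun x => f (g * x)) f
  simp only [← Fintype.card_subtype, ← Nat.card_eq_fintype_card, hline, hzeros, Finset.sum_const,
    Finset.card_univ, smul_eq_mul] at hcount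
  rw [add_comm, ← hcount, add_one_mul]

theorem isDivDiffSet_zeros [Finite G] [Finite K] [Nontrivial Kˣ] (hf : IsSemiInvariant ι χ f)
    (hι : Function.Injective ι) (hχ : Function.Surjective χ)
    (hz : ∀ a ≠ 1, Nat.card {x // f (a * x) = f x} = z) {l : ℕ}
    (hl : Nat.card K * l + Nat.card G = (Nat.card K + 1) * z) :
    IsDivDiffSet {x | f x = 0} ι.range ι.range.index (Nat.card ι.range) z z l := by
  obtain ⟨t, ht⟩ := exists_ne (1 : Kˣ)
  obtain ⟨h, rfl⟩ := hχ t
  have hzeros : Nat.card {x // f x = 0} = z := hf.card_zeros hι ht hz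
  refine ⟨ι.range.index_mul_card.symm, rfl, hzeros, ?_, fun g hg => ?_⟩
  · rintro _ ⟨c, rfl⟩ -
    rw [card_mul_inv_eq]
    simpa only [Set.mem_ofPred_eq, hf.apply_mul_eq_zero_iff, and_self] using hzeros
  · rw [card_mul_inv_eq]
    have hcommon := hf.card_common_zeros hχ hz hzeros hg
    exact Nat.eq_of_mul_eq_mul_left Nat.card_pos (Nat.add_right_cancel (hcommon.trans hl.symm))

end IsSemiInvariant

theorem card_ne_zero_and_eq_card_units {M : Type*} [GroupWithZero M] (P : M → Prop) :
    Nat.card {x : M | x ≠ 0 ∧ P x} = Nat.card {u : Mˣ // P u} :=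
  Nat.card_congr
    { toFun := fun x => ⟨Units.mk0 x.1 x.2.1, x.2.2⟩
      invFun := fun u => ⟨u.1, u.1.ne_zero, u.2⟩
      left_inv := fun _ => rfl
      right_inv := fun _ => Subtype.ext (Units.ext rfl) }

theorem mul_pow_sub_one_add_pow_sub_one {q n : ℕ} (hq : 1 ≤ q) (hn : 2 ≤ n) :
    q * (q ^ (n - 2) - 1) + (q ^ n - 1) = (q + 1) * (q ^ (n - 1) - 1) := by
  obtain ⟨k, rfl⟩ := Nat.exists_eq_add_of_le' hn
  rw [Nat.add_sub_cancel, show k + 2 - 1 = k + 1 from rfl]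
  have hk (i : ℕ) : 1 ≤ q ^ i := Nat.one_le_pow _ _ hq
  zify [hk]
  ring

section UnitGroup

variable {K L : Type*} [Field K] [Field L] {q n d : ℕ} {f : L → K}

theorem IsDiffBalanced.card_units_apply_mul_eq (hdb : IsDiffBalanced q n f) (a : Lˣ)
    (ha : a ≠ 1) : Nat.card {u : Lˣ // f ↑(a * u) = f u} = q ^ (n - 1) - 1 := by
  have hzero := (hdb a a.ne_zero (by simpa using ha)).1
  rw [card_ne_zero_and_eq_card_units fun x => f (a * x) - f x = 0] at hzero
  simpa only [sub_eq_zero, Units.val_mul] using hzero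

theorem IsDHomogeneous.isSemiInvariant [Algebra K L] (hd : IsDHomogeneous q d f) :
    IsSemiInvariant (Units.map (algebraMap K L).toMonoidHom) (powMonoidHom d : Kˣ →* Kˣ)
      (fun u : Lˣ => f u) := by
  intro c u
  simpa using hd.2 c c.ne_zero u u.ne_zero

end UnitGroup

theorem stmt_17_general {K L : Type*} [Field K] [Field L] [Algebra K L] [Finite K] [Finite L]
    {n q d : ℕ} (hn : 2 ≤ n) (hq : 2 < q) (hK : Nat.card K = q) (hL : Nat.card L = q ^ n)
    {f : L → K} (hdb : IsDiffBalanced q n f) (hd : IsDHomogeneous q d f) :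
    IsDivDiffSet {u : Lˣ | f (u : L) = 0}
      (Units.map (algebraMap K L).toMonoidHom).range
      ((q ^ n - 1) / (q - 1)) (q - 1) (q ^ (n - 1) - 1)
      (q ^ (n - 1) - 1) (q ^ (n - 2) - 1) := by
  set ι : Kˣ →* Lˣ := Units.map (algebraMap K L).toMonoidHom
  have hι : Function.Injective ι := Units.map_injective (algebraMap K L).injective
  have hKu : Nat.card Kˣ = q - 1 := by rw [Nat.card_units, hK]
  have hLu : Nat.card Lˣ = q ^ n - 1 := by rw [Nat.card_units, hL]
  have hrange : Nat.card ι.range = q - 1 := by rw [← hKu]; exact Nat.card_range_of_injective hι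
  have hindex : ι.range.index = (q ^ n - 1) / (q - 1) := by
    rw [← hLu, ← hrange, ← ι.range.index_mul_card, Nat.mul_div_cancel _ Nat.card_pos]
  have : Nontrivial Kˣ := Finite.one_lt_card_iff_nontrivial.1 (by omega)
  have hpow : Function.Surjective (powMonoidHom d : Kˣ →* Kˣ) :=
    (powCoprime (hKu ▸ hd.1.symm)).surjective
  rw [← hindex, ← hrange]
  refine hd.isSemiInvariant.isDivDiffSet_zeros hι hpow hdb.card_units_apply_mul_eq ?_
  rw [hK, hLu, mul_pow_sub_one_add_pow_sub_one (by omega) hn]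

/-- If `f : L∖{0} → K` is surjective, difference balanced and `d`-homogeneous, then
`D₀ = {x : f(x) = 0}` is a divisible difference set in `L^×` relative to `K^×` with
parameters `((qⁿ−1)/(q−1), q−1, q^{n−1}−1, q^{n−1}−1, q^{n−2}−1)`. -/
theorem stmt_17 {K L : Type*} [Field K] [Field L] [Algebra K L] [Fintype K] [Fintype L]
    (p m n q : ℕ) (hp : p.Prime) (hodd : Odd p) (hm : 1 ≤ m) (hn : 2 ≤ n)
    (hq : q = p ^ m) (hK : Fintype.card K = q) (hL : Fintype.card L = q ^ n)
    (f : L → K) (hsurj : ∀ b : K, ∃ x : L, x ≠ 0 ∧ f x = b)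
    (hdb : IsDiffBalanced q n f) (d : ℕ) (hd : IsDHomogeneous q d f) :
    IsDivDiffSet {u : Lˣ | f (u : L) = 0}
      (Units.map (algebraMap K L).toMonoidHom).range
      ((q ^ n - 1) / (q - 1)) (q - 1) (q ^ (n - 1) - 1)
      (q ^ (n - 1) - 1) (q ^ (n - 2) - 1) := by
  have hq2 : 2 < q := hq ▸ (hp.two_le.lt_of_ne' (hodd.ne_two_of_dvd_nat dvd_rfl)).trans_le
    (Nat.le_self_pow (Nat.one_le_iff_ne_zero.1 hm) p)
  exact stmt_17_general hn hq2 (Nat.card_eq_fintype_card.trans hK)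
    (Nat.card_eq_fintype_card.trans hL) hdb hd
end

section
/- Let p be an odd prime, q = p^m, and n ≥ 1. A function f : L∖{0} → K is difference balanced if and only if its graph D := {(x, f(x)) : x ∈ L∖{0}}, viewed in the group G = L^× × K with operation (x, y)(x', y') = (xx', y + y'), is a generalized difference set with parameters (q(q^n−1); q, q^n−1; q^n−1, q^{n−1}; 0, q^{n−1}−1) relative to N₁ = {1} × K and N₂ = L^× × {0}. Explicitly: f is difference balanced if and only if for all a ∈ L∖{0} and b ∈ K, the number of ordered pairs (x, y) ∈ (L∖{0})² with x·y⁻¹ = a and f(x) − f(y) = b equals q^{n−1} when a ≠ 1 and b ≠ 0, equals q^{n−1} − 1 when a ≠ 1 and b = 0, and equals 0 when a = 1 and b ≠ 0. -/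
/-- The number of ordered pairs `(x, y)` of nonzero elements of `L` with
`x·y⁻¹ = a` and `f(x) − f(y) = b`. -/
noncomputable def graphDiffCount {K L : Type*} [Field K] [Field L]
    (f : L → K) (a : L) (b : K) : ℕ :=
  Nat.card {xy : L × L | xy.1 ≠ 0 ∧ xy.2 ≠ 0 ∧ xy.1 * xy.2⁻¹ = a ∧ f xy.1 - f xy.2 = b}

lemma setOf_mul_inv_eq_image {G : Type*} [GroupWithZero G] {a : G} (ha : a ≠ 0)
    (r : G → G → Prop) :
    {xy : G × G | xy.1 ≠ 0 ∧ xy.2 ≠ 0 ∧ xy.1 * xy.2⁻¹ = a ∧ r xy.1 xy.2} =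
      (fun y => (a * y, y)) '' {y | y ≠ 0 ∧ r (a * y) y} := by
  ext ⟨x, y⟩
  constructor
  · rintro ⟨-, hy, hxy, hr⟩
    obtain rfl : x = a * y := (mul_inv_eq_iff_eq_mul₀ hy).mp hxy
    exact ⟨y, ⟨hy, hr⟩, rfl⟩
  · rintro ⟨y, ⟨hy, hr⟩, ⟨⟩⟩
    exact ⟨mul_ne_zero ha hy, hy, mul_inv_cancel_right₀ hy a, hr⟩

section

variable {K L : Type*} [Field K] [Field L]

lemma graphDiffCount_eq_card_fiber (f : L → K) {a : L} (ha : a ≠ 0) (b : K) :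
    graphDiffCount f a b = Nat.card {x : L | x ≠ 0 ∧ f (a * x) - f x = b} := by
  rw [graphDiffCount, setOf_mul_inv_eq_image ha fun x y => f x - f y = b]
  exact Nat.card_image_of_injective (fun _ _ h => congrArg Prod.snd h) _

lemma graphDiffCount_one_of_ne_zero (f : L → K) {b : K} (hb : b ≠ 0) :
    graphDiffCount f 1 b = 0 := by
  simp [graphDiffCount_eq_card_fiber f one_ne_zero, hb.symm]

lemma isBalanced_sub_iff_graphDiffCount (q n : ℕ) (f : L → K) {a : L} (ha : a ≠ 0) :
    IsBalanced q n (fun x => f (a * x) - f x) ↔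
      graphDiffCount f a 0 = q ^ (n - 1) - 1 ∧
        ∀ b : K, b ≠ 0 → graphDiffCount f a b = q ^ (n - 1) := by
  simp only [IsBalanced, graphDiffCount_eq_card_fiber f ha]

theorem stmt_18_general (q n : ℕ) (f : L → K) :
    IsDiffBalanced q n f ↔
      ((∀ a : L, a ≠ 0 → a ≠ 1 → ∀ b : K, b ≠ 0 →
          graphDiffCount f a b = q ^ (n - 1)) ∧
        (∀ a : L, a ≠ 0 → a ≠ 1 → graphDiffCount f a 0 = q ^ (n - 1) - 1) ∧
        (∀ b : K, b ≠ 0 → graphDiffCount f 1 b = 0)) := by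
  constructor
  · intro hf
    have hcount a (ha : a ≠ 0) (ha1 : a ≠ 1) :=
      (isBalanced_sub_iff_graphDiffCount q n f ha).mp (hf a ha ha1)
    exact ⟨fun a ha ha1 => (hcount a ha ha1).2, fun a ha ha1 => (hcount a ha ha1).1,
      fun _ hb => graphDiffCount_one_of_ne_zero f hb⟩
  · rintro ⟨hne, hzero, -⟩ a ha ha1
    exact (isBalanced_sub_iff_graphDiffCount q n f ha).mpr ⟨hzero a ha ha1, hne a ha ha1⟩

end

/-- `f` is difference balanced if and only if its graph is a generalized difference set
with parameters `(q(qⁿ−1); q, qⁿ−1; qⁿ−1, q^{n−1}; 0, q^{n−1}−1)` relative to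
`N₁ = {1} × K` and `N₂ = L^× × {0}`; explicitly, the number of ordered pairs of
nonzero `(x, y)` with `x·y⁻¹ = a`, `f(x) − f(y) = b` equals `q^{n−1}` for `a ≠ 1`,
`b ≠ 0`; equals `q^{n−1} − 1` for `a ≠ 1`, `b = 0`; and equals `0` for `a = 1`,
`b ≠ 0`. -/
theorem stmt_18 {K L : Type*} [Field K] [Field L] [Algebra K L] [Fintype K] [Fintype L]
    (p m n q : ℕ) (hp : p.Prime) (hodd : Odd p) (hm : 1 ≤ m) (hn : 1 ≤ n)
    (hq : q = p ^ m) (hK : Fintype.card K = q) (hL : Fintype.card L = q ^ n)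
    (f : L → K) :
    IsDiffBalanced q n f ↔
      ((∀ a : L, a ≠ 0 → a ≠ 1 → ∀ b : K, b ≠ 0 →
          graphDiffCount f a b = q ^ (n - 1)) ∧
        (∀ a : L, a ≠ 0 → a ≠ 1 → graphDiffCount f a 0 = q ^ (n - 1) - 1) ∧
        (∀ b : K, b ≠ 0 → graphDiffCount f 1 b = 0)) :=
  stmt_18_general q n f
end

section
/- Let G be a finite abelian group of order v with subgroups N₁ and N₂ of orders n₁ and n₂ satisfying N₁ ∩ N₂ = {1}, and let D ⊆ G be a (v; n₁, n₂; k, λ; 0, 0) generalized difference set relative to N₁ and N₂. Let H ≤ N₁ be a subgroup of order m and let ρ : G → G/H be the quotient homomorphism. Then ρ is injective on D, and ρ(D) is a (v/m; n₁/m, n₂; k, mλ; 0, λ(m−1)) generalized difference set in G/H relative to the subgroups N₁/H and ρ(N₂). -/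
/-- The number of representations of `g` as a difference `d₁d₂⁻¹` of two distinct
elements of `D`. -/
noncomputable def gdsDiffCount {G : Type*} [Group G] (D : Set G) (g : G) : ℕ :=
  Nat.card {pq : G × G // pq.1 ∈ D ∧ pq.2 ∈ D ∧ pq.1 ≠ pq.2 ∧ pq.1 * pq.2⁻¹ = g}

/-- `D ⊆ G` is a `(v; n₁, n₂; k, λ; λ₁, λ₂)` generalized difference set relative to
subgroups `N₁`, `N₂`: `|G| = v`, `|N₁| = n₁`, `|N₂| = n₂`, `|D| = k`, every
`g ∉ N₁ ∪ N₂` has exactly `λ` representations as a difference of distinct elements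
of `D`, every `g ∈ N₁∖{1}` exactly `λ₁`, and every `g ∈ N₂∖{1}` exactly `λ₂`. -/
def IsGenDiffSet {G : Type*} [Group G] (D : Set G) (N₁ N₂ : Subgroup G)
    (v n₁ n₂ k lam l₁ l₂ : ℕ) : Prop :=
  Nat.card G = v ∧ Nat.card N₁ = n₁ ∧ Nat.card N₂ = n₂ ∧ Nat.card D = k ∧
    (∀ g : G, g ∉ N₁ → g ∉ N₂ → gdsDiffCount D g = lam) ∧
    (∀ g : G, g ∈ N₁ → g ≠ 1 → gdsDiffCount D g = l₁) ∧
    (∀ g : G, g ∈ N₂ → g ≠ 1 → gdsDiffCount D g = l₂)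

/-!
The fibre of `(p, q) ↦ f (p * q⁻¹)` over `f x` is the disjoint union of the fibres of
`(p, q) ↦ p * q⁻¹` over the coset `x * ker f`. If `f` is injective on `D`, the representations of
`f x` by `f '' D` are therefore counted by summing `gdsDiffCount D` over that coset. When
`ker f ≤ N₁` and `N₁ ⊓ N₂ = ⊥`, a coset other than `ker f` either avoids `N₁ ∪ N₂`, or lies in
`N₁`, or meets `N₁ ∪ N₂` in a single element of `N₂`. Injectivity on `D` holds because the quotient
of two distinct elements of `D` identified by `f` would be a represented element of `N₁ \ {1}`,
while `λ₁ = 0`.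
-/

/-- The representations of `g` as a difference in `D`, as a set of pairs, so that representations
of different elements can be collected in unions. -/
def diffReps {G : Type*} [Group G] (D : Set G) (g : G) : Set (G × G) :=
  {pq ∈ D.offDiag | pq.1 * pq.2⁻¹ = g}

section

variable {G K : Type*} [Group G] [Group K] {D : Set G} {f : G →* K} {x : G}

theorem gdsDiffCount_eq_ncard_diffReps (D : Set G) (g : G) :
    gdsDiffCount D g = (diffReps D g).ncard := by
  simp only [gdsDiffCount, diffReps, ← Nat.card_coe_set_eq, Set.coe_ofPred, Set.mem_offDiag,
    and_assoc]

theorem finite_diffReps (hD : D.Finite) (g : G) : (diffReps D g).Finite :=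
  (hD.prod hD).subset fun _ h => Set.offDiag_subset_prod D h.1

theorem gdsDiffCount_mul_inv_ne_zero (hD : D.Finite) {p q : G} (hp : p ∈ D) (hq : q ∈ D)
    (hpq : p ≠ q) : gdsDiffCount D (p * q⁻¹) ≠ 0 := by
  rw [gdsDiffCount_eq_ncard_diffReps]
  exact Set.ncard_ne_zero_of_mem (a := (p, q)) ⟨⟨hp, hq, hpq⟩, rfl⟩ (finite_diffReps hD _)

theorem injOn_of_gdsDiffCount_eq_zero_on_ker (hD : D.Finite)
    (hzero : ∀ g ∈ f.ker, g ≠ 1 → gdsDiffCount D g = 0) : Set.InjOn f D := by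
  intro p hp q hq hfpq
  by_contra hpq
  have hmem : p * q⁻¹ ∈ f.ker := by
    rwa [← div_eq_mul_inv, MonoidHom.div_mem_ker_iff]
  exact gdsDiffCount_mul_inv_ne_zero hD hp hq hpq
    (hzero _ hmem (mul_inv_eq_one.not.2 hpq))

theorem diffReps_image_of_injOn (hf : Set.InjOn f D) (x : G) :
    diffReps (f '' D) (f x) = Prod.map f f '' ⋃ h : f.ker, diffReps D (x * h) := by
  ext ⟨a, b⟩
  simp only [Set.mem_image, Set.mem_iUnion]
  constructor
  · rintro ⟨⟨⟨p, hp, rfl⟩, ⟨q, hq, rfl⟩, hpq⟩, hx⟩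
    have hker : x⁻¹ * (p * q⁻¹) ∈ f.ker :=
      f.eq_iff.1 (by rw [map_mul, map_inv]; exact hx)
    exact ⟨(p, q), ⟨⟨_, hker⟩, ⟨hp, hq, ne_of_apply_ne f hpq⟩, (mul_inv_cancel_left x _).symm⟩, rfl⟩
  · rintro ⟨⟨p, q⟩, ⟨⟨h, hh⟩, ⟨hp, hq, hpq⟩, hx : p * q⁻¹ = x * h⟩, heq⟩
    obtain ⟨rfl, rfl⟩ := Prod.mk.inj heq
    refine ⟨⟨⟨p, hp, rfl⟩, ⟨q, hq, rfl⟩, hf.ne hp hq hpq⟩, ?_⟩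
    change f p * (f q)⁻¹ = f x
    rw [← map_inv, ← map_mul, hx, map_mul, f.mem_ker.1 hh, mul_one]

theorem gdsDiffCount_image_of_injOn [Fintype f.ker] (hD : D.Finite) (hf : Set.InjOn f D) (x : G) :
    gdsDiffCount (f '' D) (f x) = ∑ h : f.ker, gdsDiffCount D (x * h) := by
  have hinj : Set.InjOn (Prod.map f f) (⋃ h : f.ker, diffReps D (x * h)) :=
    (hf.prodMap hf).mono <| Set.iUnion_subset fun _ _ hpq => Set.offDiag_subset_prod D hpq.1
  have hdisj : Pairwise (Function.onFun Disjoint fun h : f.ker => diffReps D (x * h)) :=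
    fun h h' hne => Set.disjoint_left.2 fun _ hpq hpq' =>
      hne <| Subtype.ext <| mul_left_cancel <| hpq.2.symm.trans hpq'.2
  simp only [gdsDiffCount_eq_ncard_diffReps]
  rw [diffReps_image_of_injOn hf, hinj.ncard_image,
    Set.ncard_iUnion_of_finite (fun _ => finite_diffReps hD _) hdisj, finsum_eq_sum_of_fintype]

theorem gdsDiffCount_image_of_const_on_fiber [Finite f.ker] {c : ℕ} (hD : D.Finite)
    (hf : Set.InjOn f D) (hc : ∀ g, f g = f x → gdsDiffCount D g = c) :
    gdsDiffCount (f '' D) (f x) = Nat.card f.ker * c := by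
  have := Fintype.ofFinite f.ker
  have hcoset (t : f.ker) : gdsDiffCount D (x * t) = c :=
    hc _ (by rw [map_mul, f.mem_ker.1 t.2, mul_one])
  rw [gdsDiffCount_image_of_injOn hD hf, Fintype.sum_congr _ _ hcoset, Finset.sum_const,
    Finset.card_univ, smul_eq_mul, Nat.card_eq_fintype_card]

theorem card_map_mul_card_ker_inf (f : G →* K) (N : Subgroup G) :
    Nat.card (N.map f) * Nat.card ↥(f.ker ⊓ N) = Nat.card N := by
  rw [← Subgroup.relIndex_ker, ← Subgroup.inf_relIndex_right, mul_comm,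
    ← Subgroup.relIndex_bot_left (f.ker ⊓ N),
    Subgroup.relIndex_mul_relIndex _ _ _ bot_le inf_le_right, Subgroup.relIndex_bot_left]

theorem card_map_of_ker_le [Finite f.ker] {N : Subgroup G} (hN : f.ker ≤ N) :
    Nat.card (N.map f) = Nat.card N / Nat.card f.ker := by
  rw [← card_map_mul_card_ker_inf f N, inf_of_le_left hN, Nat.mul_div_cancel _ Nat.card_pos]

theorem card_map_of_disjoint_ker {N : Subgroup G} (hN : Disjoint f.ker N) :
    Nat.card (N.map f) = Nat.card N := by
  rw [← card_map_mul_card_ker_inf f N, hN.eq_bot, Subgroup.card_bot, mul_one]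

theorem card_codomain_of_surjective [Finite f.ker] (hf : Function.Surjective f) :
    Nat.card K = Nat.card G / Nat.card f.ker := by
  rw [← Subgroup.card_top (G := K), ← Subgroup.map_top_of_surjective f hf,
    card_map_of_ker_le le_top, Subgroup.card_top]

namespace IsGenDiffSet

variable {N₁ N₂ : Subgroup G} {v n₁ n₂ k lam l₁ l₂ : ℕ}

theorem injOn_of_ker_le (h : IsGenDiffSet D N₁ N₂ v n₁ n₂ k lam 0 l₂) (hD : D.Finite)
    (hker : f.ker ≤ N₁) : Set.InjOn f D := by
  have ⟨_, _, _, _, _, hN₁, _⟩ := h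
  exact injOn_of_gdsDiffCount_eq_zero_on_ker hD fun g hg => hN₁ g (hker hg)

theorem gdsDiffCount_image_of_notMem_map [Finite f.ker]
    (h : IsGenDiffSet D N₁ N₂ v n₁ n₂ k lam l₁ l₂) (hD : D.Finite) (hf : Set.InjOn f D)
    (hx₁ : f x ∉ N₁.map f) (hx₂ : f x ∉ N₂.map f) :
    gdsDiffCount (f '' D) (f x) = Nat.card f.ker * lam := by
  have ⟨_, _, _, _, hlam, _, _⟩ := h
  exact gdsDiffCount_image_of_const_on_fiber hD hf fun g hg =>
    hlam g (fun hgN => hx₁ ⟨g, hgN, hg⟩) (fun hgN => hx₂ ⟨g, hgN, hg⟩)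

theorem gdsDiffCount_image_of_mem_left [Finite f.ker]
    (h : IsGenDiffSet D N₁ N₂ v n₁ n₂ k lam l₁ l₂) (hD : D.Finite) (hf : Set.InjOn f D)
    (hker : f.ker ≤ N₁) (hx : x ∈ N₁) (hfx : f x ≠ 1) :
    gdsDiffCount (f '' D) (f x) = Nat.card f.ker * l₁ := by
  have ⟨_, _, _, _, _, hN₁, _⟩ := h
  refine gdsDiffCount_image_of_const_on_fiber hD hf fun g hg => hN₁ g ?_ ?_
  · rw [← Subgroup.comap_map_eq_self hker]
    exact ⟨x, hx, hg.symm⟩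
  · exact ne_of_apply_ne f (by rwa [hg, map_one])

theorem gdsDiffCount_image_of_mem_right [Finite f.ker]
    (h : IsGenDiffSet D N₁ N₂ v n₁ n₂ k lam l₁ l₂) (hD : D.Finite) (hf : Set.InjOn f D)
    (hker : f.ker ≤ N₁) (hdisj : Disjoint N₁ N₂) (hx : x ∈ N₂) (hx1 : x ≠ 1) :
    gdsDiffCount (f '' D) (f x) = l₂ + lam * (Nat.card f.ker - 1) := by
  classical
  have := Fintype.ofFinite f.ker
  have ⟨_, _, _, _, hlam, _, hN₂⟩ := h
  have hxN₁ : x ∉ N₁ := fun hx' => hx1 (Subgroup.disjoint_def.1 hdisj hx' hx)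
  have hcount (t : f.ker) (ht : t ≠ 1) : gdsDiffCount D (x * t) = lam := by
    refine hlam _ (fun hxt => hxN₁ ((N₁.mul_mem_cancel_right (hker t.2)).1 hxt)) fun hxt => ht ?_
    exact Subtype.ext <|
      Subgroup.disjoint_def.1 hdisj (hker t.2) ((N₂.mul_mem_cancel_left hx).1 hxt)
  rw [gdsDiffCount_image_of_injOn hD hf, ← Finset.add_sum_erase _ _ (Finset.mem_univ 1),
    Finset.sum_congr rfl fun t ht => hcount t (Finset.ne_of_mem_erase ht), Finset.sum_const,
    Finset.card_erase_of_mem (Finset.mem_univ _), Finset.card_univ, ← Nat.card_eq_fintype_card,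
    smul_eq_mul, mul_comm, OneMemClass.coe_one, mul_one, hN₂ x hx hx1]

end IsGenDiffSet

end

theorem stmt_19_general {G K : Type*} [Group G] [Finite G] [Group K]
    (f : G →* K) (hf : Function.Surjective f) (D : Set G) (N₁ N₂ : Subgroup G)
    (hker : f.ker ≤ N₁) (hdisj : Disjoint N₁ N₂)
    (v n₁ n₂ k lam l₂ m : ℕ) (hm : Nat.card f.ker = m)
    (hD : IsGenDiffSet D N₁ N₂ v n₁ n₂ k lam 0 l₂) :
    Set.InjOn f D ∧
      IsGenDiffSet (f '' D) (N₁.map f) (N₂.map f)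
        (v / m) (n₁ / m) n₂ k (m * lam) 0 (l₂ + lam * (m - 1)) := by
  have hinj : Set.InjOn f D := hD.injOn_of_ker_le D.toFinite hker
  have ⟨hv, hn₁, hn₂, hk, _⟩ := hD
  subst hm
  refine ⟨hinj, hv ▸ card_codomain_of_surjective hf, hn₁ ▸ card_map_of_ker_le hker,
    hn₂ ▸ card_map_of_disjoint_ker (hdisj.mono_left hker),
    hk ▸ Nat.card_image_of_injOn hinj, ?_, ?_, ?_⟩
  · intro y hy₁ hy₂
    obtain ⟨x, rfl⟩ := hf y
    exact hD.gdsDiffCount_image_of_notMem_map D.toFinite hinj hy₁ hy₂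
  · rintro _ ⟨x, hx, rfl⟩ hfx
    exact hD.gdsDiffCount_image_of_mem_left D.toFinite hinj hker hx hfx
  · rintro _ ⟨x, hx, rfl⟩ hfx
    exact hD.gdsDiffCount_image_of_mem_right D.toFinite hinj hker hdisj hx
      (ne_of_apply_ne f (by rwa [map_one]))

/-- Projection of a generalized difference set with two exceptional subgroups and
`λ₁ = λ₂ = 0` along a subgroup `H ≤ N₁` of order `m`: the quotient map is injective
on `D` and the image is a `(v/m; n₁/m, n₂; k, mλ; 0, λ(m−1))` generalized difference
set relative to `N₁/H` and the image of `N₂`. -/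
theorem stmt_19 {G : Type*} [CommGroup G] [Finite G]
    (D : Set G) (N₁ N₂ H : Subgroup G) (hH : H ≤ N₁) (htriv : N₁ ⊓ N₂ = ⊥)
    (v n₁ n₂ k lam m : ℕ) (hm : Nat.card H = m)
    (hD : IsGenDiffSet D N₁ N₂ v n₁ n₂ k lam 0 0) :
    Set.InjOn (QuotientGroup.mk' H) D ∧
      IsGenDiffSet ((QuotientGroup.mk' H) '' D)
        (N₁.map (QuotientGroup.mk' H)) (N₂.map (QuotientGroup.mk' H))
        (v / m) (n₁ / m) n₂ k (m * lam) 0 (lam * (m - 1)) := by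
  simpa only [zero_add] using stmt_19_general (QuotientGroup.mk' H) (QuotientGroup.mk'_surjective H)
    D N₁ N₂ (by rwa [QuotientGroup.ker_mk']) (disjoint_iff.2 htriv) v n₁ n₂ k lam 0 m
    (by rwa [QuotientGroup.ker_mk']) hD
end
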